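/- For every natural number n ≥ 7, every irreducible complex representation of the alternating group A_n on a finite-dimensional complex vector space of dimension at most n+2 has dimension equal to 1 or equal to n−1. -/

import Mathlib

/-!
Call a representation of `A_n` good if `(x - 1)(y - 1) = 0` on it for any two disjoint 3-cycles
`x`, `y`. The proof has two halves.

**A good representation is trivial or contains the standard one** (`Good.exists_invariant`). If
`x = (a b c)` acts nontrivially, the vectors `x v - v` are fixed by the pointwise stabiliser of
`{a, b, c}`. Antisymmetrising one of them by a double transposition `(a b)(k l)` gives a vector `w`
that is fixed by the pointwise stabiliser of `{a, b}`, negated by the even permutations exchanging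
`a` and `b`, and satisfies `w + x w + x² w = 0`, just as `e_a - e_b` does (`exists_w`). Its
translates yield pairwise distinct vectors `v i` permuted by `A_n` with sum zero, spanning an
invariant subspace of dimension `n - 1`.

**Every representation of dimension at most `n + 2` is good** (`good_of_finrank_le`). Since
`(x - 1)(y - 1)` is diagonalisable, one may assume irreducibility. Restrict to `A_7` and decompose
under `⟨x, y⟩ ≅ C₃ × C₃`: by fusion, only three multiplicities `m`, `p`, `q` occur, the dimension is
`m + 4 p + 4 q`, and in a bad representation `p, q ≥ 1` (`a7_numerics`). By induction on `n`:

* for `n ≥ 10`, the eigenspaces of `x` for the primitive cube roots of unity have dimension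
  `p + 2 q` and carry representations of the `A_{n-3}` commuting with `x`; on at least one of them
  `y` is nontrivial, so the induction hypothesis and the first half give `p + 2 q ≥ n - 4`, making
  the total dimension at least `2 n - 6 > n + 2`;
* for `n ≤ 9`, only dimensions 8 to 11 are left, where the character value `m + p - 2 q` on 3-cycles
  is known. It contradicts the fact that the degree of an irreducible character divides (class
  size) × (character value). In the one exceptional case, dimension 9 for `n = 7`, the class of
  double transpositions is used instead (`a7_dim_nine`).
-/

open Equiv.Perm

/-! ### Maps between alternating groups, and some elements of `A_7` -/

/-- The homomorphism of alternating groups that extends even permutations along an embedding `f`,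
fixing all points outside the range of `f`. -/
noncomputable def altMap {α β : Type} [Fintype α] [DecidableEq α] [Fintype β] [DecidableEq β]
    (f : β ↪ α) : alternatingGroup β →* alternatingGroup α :=
  ((viaEmbeddingHom f).comp (alternatingGroup β).subtype).codRestrict _ (fun g => by
    have hg : sign (g : Equiv.Perm β) = 1 := mem_alternatingGroup.1 g.2
    rw [mem_alternatingGroup]
    show sign (viaEmbedding (g : Equiv.Perm β) f) = 1
    rw [← hg]
    unfold viaEmbedding
    exact (by convert sign_extendDomain (g : Equiv.Perm β) (Equiv.ofInjective f.1 f.2)))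

section
variable {α β : Type} [Fintype α] [DecidableEq α] [Fintype β] [DecidableEq β]

theorem altMap_apply (f : β ↪ α) (g : alternatingGroup β) (i : β) :
    (altMap f g : Equiv.Perm α) (f i) = f ((g : Equiv.Perm β) i) :=
  viaEmbedding_apply _ _ _

theorem altMap_apply_of_notMem (f : β ↪ α) (g : alternatingGroup β) (i : α)
    (hi : i ∉ Set.range f) : (altMap f g : Equiv.Perm α) i = i :=
  viaEmbedding_apply_of_notMem _ _ _ hi

theorem altMap_eq_of (f : β ↪ α) (g : alternatingGroup β) (h : alternatingGroup α)
    (h1 : ∀ i, (h : Equiv.Perm α) (f i) = f ((g : Equiv.Perm β) i))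
    (h2 : ∀ i, i ∉ Set.range f → (h : Equiv.Perm α) i = i) : altMap f g = h := by
  apply Subtype.ext
  ext i
  by_cases hi : i ∈ Set.range f
  · obtain ⟨j, rfl⟩ := hi
    rw [altMap_apply, h1]
  · rw [altMap_apply_of_notMem _ _ _ hi, h2 i hi]

end

/-- The 3-cycle `(0 1 2)` in `A_7`. -/
def x7 : alternatingGroup (Fin 7) :=
  ⟨Equiv.swap 0 1 * Equiv.swap 1 2, mem_alternatingGroup.2 (by decide)⟩
/-- The 3-cycle `(4 5 6)` in `A_7`, disjoint from `x7`. -/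
def y7 : alternatingGroup (Fin 7) :=
  ⟨Equiv.swap 4 5 * Equiv.swap 5 6, mem_alternatingGroup.2 (by decide)⟩

/-- The even permutation `(i j)(k l)` in `A_7`. The two transpositions need not be disjoint, so that
3-cycles such as `dt 0 1 1 3` are included. -/
def dt (i j k l : Fin 7) (h : sign (Equiv.swap i j * Equiv.swap k l) = 1 := by decide) :
  alternatingGroup (Fin 7) := ⟨Equiv.swap i j * Equiv.swap k l, mem_alternatingGroup.2 h⟩

theorem x7_cube : x7 * (x7 * x7) = 1 := by decide
theorem y7_cube : y7 * (y7 * y7) = 1 := by decide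
theorem x7_comm : x7 * y7 = y7 * x7 := by decide

/-! ### Traces and spectral projections of elements of order three -/

section traces
variable {G V : Type} [Group G] [AddCommGroup V] [Module ℂ V]

theorem trace_eq_of_isConj (σ : Representation ℂ G V) {g h : G} (hc : IsConj g h) :
    LinearMap.trace ℂ V (σ g) = LinearMap.trace ℂ V (σ h) := by
  obtain ⟨c, rfl⟩ := isConj_iff.1 hc
  rw [map_mul σ, LinearMap.trace_mul_comm, ← map_mul σ]
  simp

theorem exists_nat_trace [FiniteDimensional ℂ V] {e : Module.End ℂ V} (he : IsIdempotentElem e) :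
    ∃ m : ℕ, LinearMap.trace ℂ V e = m :=
  ⟨_, (LinearMap.IsIdempotentElem.isProj_range e he).trace⟩

theorem exists_omega : ∃ ω : ℂ, ω ^ 2 + ω + 1 = 0 := by
  obtain ⟨ω, h⟩ := IsAlgClosed.exists_root (Polynomial.X ^ 2 + Polynomial.X + 1 : Polynomial ℂ) (by
    have : (Polynomial.X ^ 2 + Polynomial.X + 1 : Polynomial ℂ).degree = 2 := by compute_degree!
    rw [this]; norm_num)
  exact ⟨ω, by simpa using h⟩

/-- For `g³ = 1` and `ζ³ = 1`, the projection `(1 + ζ g + ζ² g²) / 3` onto the eigenspace of `g`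
with eigenvalue `ζ⁻¹`. -/
noncomputable def proj3 (σ : Representation ℂ G V) (ζ : ℂ) (g : G) : Module.End ℂ V :=
  (1 / 3 : ℂ) • (1 + ζ • σ g + ζ ^ 2 • σ (g * g))

theorem proj3_idem (σ : Representation ℂ G V) {ζ : ℂ} (hζ : ζ ^ 3 = 1) {g : G}
    (hg : g * (g * g) = 1) : IsIdempotentElem (proj3 σ ζ g) := by
  have h1 : g * g * g = 1 := by rw [mul_assoc, hg]
  have h2 : g * g * (g * g) = g := by rw [← mul_assoc, h1, one_mul]
  unfold IsIdempotentElem proj3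
  simp only [mul_add, add_mul, smul_mul_assoc, mul_smul_comm, one_mul, mul_one, ← map_mul, hg, h1,
    h2, map_one]
  match_scalars
  · linear_combination (2/9) * hζ
  · linear_combination (ζ/9) * hζ
  · ring

theorem proj3_commute (σ : Representation ℂ G V) (ζ ξ : ℂ) {g h : G} (hgh : g * h = h * g) :
    Commute (proj3 σ ζ g) (proj3 σ ξ h) := by
  have h0 : Commute g h := hgh
  have hc : ∀ {a b : G}, Commute a b → Commute (σ a) (σ b) := fun h => h.map σ
  unfold proj3
  refine Commute.smul_left (Commute.smul_right ?_ _) _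
  refine Commute.add_left (Commute.add_left (Commute.one_left _) (Commute.smul_left ?_ _))
    (Commute.smul_left ?_ _)
  · exact Commute.add_right (Commute.add_right (Commute.one_right _)
      (Commute.smul_right (hc h0) _)) (Commute.smul_right (hc (h0.mul_right h0)) _)
  · have h1 : Commute (g * g) h := h0.mul_left h0
    exact Commute.add_right (Commute.add_right (Commute.one_right _)
      (Commute.smul_right (hc h1) _)) (Commute.smul_right (hc (h1.mul_right h1)) _)

theorem mul_proj3_one (σ : Representation ℂ G V) {g : G} (hg : g * (g * g) = 1) :
    σ g * proj3 σ 1 g = proj3 σ 1 g := by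
  unfold proj3
  simp only [mul_add, mul_smul_comm, mul_one, ← map_mul, hg, map_one]
  module

theorem proj3_comm_apply (ρ : Representation ℂ G V) (ζ : ℂ) {g h : G}
    (hgh : g * h = h * g) : ρ h * proj3 ρ ζ g = proj3 ρ ζ g * ρ h := by
  have : h * (g * g) = g * g * h := by rw [← mul_assoc, ← hgh, mul_assoc, ← hgh, mul_assoc]
  unfold proj3
  simp only [mul_add, add_mul, mul_smul_comm, smul_mul_assoc, mul_one, one_mul, ← map_mul, hgh,
    this]

end traces

/-! ### Representations of `A_7` -/

section A7
variable {V : Type} [AddCommGroup V] [Module ℂ V]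

local notation "tr" => LinearMap.trace ℂ _

variable (σ : Representation ℂ (alternatingGroup (Fin 7)) V)

theorem tr_x7x7 : tr (σ (x7 * x7)) = tr (σ x7) :=
  (trace_eq_of_isConj σ (isConj_iff.2 ⟨dt 0 1 3 4, by decide⟩)).symm
theorem tr_y7 : tr (σ y7) = tr (σ x7) :=
  (trace_eq_of_isConj σ (isConj_iff.2 ⟨dt 0 1 0 4 * dt 1 5 2 6, by decide⟩)).symm
theorem tr_y7y7 : tr (σ (y7 * y7)) = tr (σ x7) :=
  (trace_eq_of_isConj σ (isConj_iff.2 ⟨dt 0 1 0 4 * dt 1 6 2 5, by decide⟩)).symm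
theorem tr_xxy : tr (σ (x7 * x7 * y7)) = tr (σ (x7 * y7)) :=
  (trace_eq_of_isConj σ (isConj_iff.2 ⟨dt 0 1 0 4 * dt 1 5 2 6, by decide⟩)).symm
theorem tr_xyy : tr (σ (x7 * (y7 * y7))) = tr (σ (x7 * y7)) :=
  (trace_eq_of_isConj σ (isConj_iff.2 ⟨dt 0 1 0 4 * dt 1 6 2 5, by decide⟩)).symm
theorem tr_xxyy : tr (σ (x7 * x7 * (y7 * y7))) = tr (σ (x7 * y7)) :=
  (trace_eq_of_isConj σ (isConj_iff.2 ⟨dt 0 1 4 5, by decide⟩)).symm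

/-- A product of two conjugates of `(0 1)(2 3)` is `(0 1 2)`. -/
theorem x7_eq_one_of_dt (h : σ (dt 0 1 2 3) = 1) : σ x7 = 1 := by
  have key : ∀ g, IsConj (dt 0 1 2 3) g → σ g = 1 := by
    intro g hg
    obtain ⟨c, rfl⟩ := isConj_iff.1 hg
    rw [map_mul, map_mul, h, mul_one, ← map_mul, mul_inv_cancel, map_one]
  have h1 := key (dt 0 1 4 5) (isConj_iff.2 ⟨dt 2 4 3 5, by decide⟩)
  have h2 := key (dt 1 2 4 5) (isConj_iff.2 ⟨dt 0 1 0 3 * dt 0 4 1 5, by decide⟩)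
  have : x7 = dt 0 1 4 5 * dt 1 2 4 5 := by decide
  rw [this, map_mul, h1, h2, one_mul]

theorem tr_a2 : tr (σ (dt 0 2 1 3)) = tr (σ (dt 0 1 2 3)) :=
  (trace_eq_of_isConj σ (isConj_iff.2 ⟨dt 0 1 0 2, by decide⟩)).symm
theorem tr_a3 : tr (σ (dt 0 3 1 2)) = tr (σ (dt 0 1 2 3)) :=
  (trace_eq_of_isConj σ (isConj_iff.2 ⟨dt 0 1 0 3, by decide⟩)).symm

/-- The projection onto the fixed space of a Klein four-group `{1, a, b, c}`. -/
theorem klein_idem {a b c : alternatingGroup (Fin 7)} (ha : a * a = 1) (hb : b * b = 1)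
    (hab : a * b = c) (hba : b * a = c) :
    IsIdempotentElem ((1 / 4 : ℂ) • (1 + σ a + σ b + σ c)) := by
  have h1 : a * c = b := by rw [← hab, ← mul_assoc, ha, one_mul]
  have h2 : b * c = a := by rw [← hba, ← mul_assoc, hb, one_mul]
  have h3 : c * b = a := by rw [← hab, mul_assoc, hb, mul_one]
  have h4 : c * a = b := by rw [← hba, mul_assoc, ha, mul_one]
  have h5 : c * c = 1 := by rw [← hab, mul_assoc, hab, h2, ha]
  unfold IsIdempotentElem
  simp only [mul_add, add_mul, smul_mul_assoc, mul_smul_comm, one_mul, mul_one, ← map_mul, ha, hb,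
    hab, hba, h1, h2, h3, h4, h5, map_one]
  module

/-- The projection onto the common eigenspace `a = 1`, `b = c = -1` of a Klein four-group. -/
theorem klein_idem' {a b c : alternatingGroup (Fin 7)} (ha : a * a = 1) (hb : b * b = 1)
    (hab : a * b = c) (hba : b * a = c) :
    IsIdempotentElem ((1 / 4 : ℂ) • (1 + σ a - σ b - σ c)) := by
  have h1 : a * c = b := by rw [← hab, ← mul_assoc, ha, one_mul]
  have h2 : b * c = a := by rw [← hba, ← mul_assoc, hb, one_mul]
  have h3 : c * b = a := by rw [← hab, mul_assoc, hb, mul_one]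
  have h4 : c * a = b := by rw [← hba, mul_assoc, ha, mul_one]
  have h5 : c * c = 1 := by rw [← hab, mul_assoc, hab, h2, ha]
  unfold IsIdempotentElem
  simp only [mul_add, add_mul, mul_sub, sub_mul, smul_mul_assoc, mul_smul_comm, one_mul, mul_one,
    ← map_mul, ha, hb, hab, hba, h1, h2, h3, h4, h5, map_one]
  module

variable [FiniteDimensional ℂ V]

theorem tr_proj_mul (ζ ξ : ℂ) :
    tr (proj3 σ ζ x7 * proj3 σ ξ y7) = (1 / 9) * (Module.finrank ℂ V
      + (ζ + ζ ^ 2 + ξ + ξ ^ 2) * tr (σ x7) + (ζ + ζ ^ 2) * (ξ + ξ ^ 2) * tr (σ (x7 * y7))) := by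
  unfold proj3
  simp only [mul_add, add_mul, smul_mul_assoc, mul_smul_comm, one_mul, mul_one, ← map_mul σ,
    map_add, map_smul, smul_eq_mul, LinearMap.trace_one, tr_x7x7, tr_y7, tr_y7y7, tr_xxy, tr_xyy,
    tr_xxyy]
  ring

theorem tr_proj_x : tr (proj3 σ 1 x7) = (1 / 3) * (Module.finrank ℂ V + 2 * tr (σ x7)) := by
  unfold proj3
  simp only [map_add, map_smul, smul_eq_mul, LinearMap.trace_one, tr_x7x7]
  ring

theorem tr_proj_y : tr (proj3 σ 1 y7) = (1 / 3) * (Module.finrank ℂ V + 2 * tr (σ x7)) := by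
  unfold proj3
  simp only [map_add, map_smul, smul_eq_mul, LinearMap.trace_one, tr_y7, tr_y7y7]
  ring

/-- An involution whose trace is the full dimension acts trivially. -/
theorem dt_eq_one_of_trace (h : tr (σ (dt 0 1 2 3)) = Module.finrank ℂ V) :
    σ (dt 0 1 2 3) = 1 := by
  have hsq : σ (dt 0 1 2 3) * σ (dt 0 1 2 3) = 1 := by
    rw [← map_mul, show dt 0 1 2 3 * dt 0 1 2 3 = 1 by decide, map_one]
  have hid : IsIdempotentElem ((1 / 2 : ℂ) • (1 - σ (dt 0 1 2 3))) := by
    unfold IsIdempotentElem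
    simp only [mul_sub, sub_mul, smul_mul_assoc, mul_smul_comm, one_mul, mul_one, hsq]
    module
  have h0 := (LinearMap.IsIdempotentElem.trace_eq_zero_iff hid).1 (by
    simp only [map_sub, map_smul, LinearMap.trace_one, h]; simp)
  have := (smul_eq_zero.1 h0).resolve_left (by norm_num)
  exact (sub_eq_zero.1 this).symm

/-- The hypothesis says that the eigenspace `x = 1`, `y = ω` is zero. Then `x = (0 1 2)` and
`y = (4 5 6)` have the same fixed space, so that it is stable under the centralisers of both. On it
`x` permutes the three involutions of the Klein four-group on `{0, 1, 2, 3}` cyclically and acts as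
the identity, so they coincide there and are trivial; comparing traces, they act trivially
everywhere. -/
theorem x7_eq_one_of_p (hp : Module.finrank ℂ V + tr (σ x7) = 2 * tr (σ (x7 * y7))) :
    σ x7 = 1 := by
  have hex := proj3_idem σ (one_pow 3) x7_cube
  have hey := proj3_idem σ (one_pow 3) y7_cube
  have hcomm := proj3_commute σ 1 1 x7_comm
  have hxy := tr_proj_mul σ 1 1
  have hx := tr_proj_x σ
  have hy := tr_proj_y σ
  have fx : σ x7 * proj3 σ 1 x7 = proj3 σ 1 x7 := mul_proj3_one σ x7_cube
  have cc : ∀ g, y7 * g = g * y7 → σ g * proj3 σ 1 y7 = proj3 σ 1 y7 * σ g :=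
    fun g hg => proj3_comm_apply σ 1 hg
  have k4 : tr (σ (dt 0 1 2 3) * proj3 σ 1 x7) = (1 / 3) * (tr (σ (dt 0 1 2 3)) + 2 * tr (σ x7)) := by
    unfold proj3
    simp only [mul_add, mul_smul_comm, mul_one, ← map_mul σ, map_add, map_smul, smul_eq_mul]
    rw [← trace_eq_of_isConj σ (g := x7) (h := dt 0 1 2 3 * x7)
      (isConj_iff.2 ⟨dt 0 1 1 3, by decide⟩),
      ← trace_eq_of_isConj σ (g := x7) (h := dt 0 1 2 3 * (x7 * x7))
      (isConj_iff.2 ⟨dt 1 3 3 4, by decide⟩)]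
    ring
  generalize proj3 σ 1 x7 = ex at *
  generalize proj3 σ 1 y7 = ey at *
  have i1 : IsIdempotentElem (ex * (1 - ey)) :=
    IsIdempotentElem.mul_of_commute ((Commute.one_right _).sub_right hcomm) hex hey.one_sub
  have i2 : IsIdempotentElem ((1 - ex) * ey) :=
    IsIdempotentElem.mul_of_commute ((Commute.one_left _).sub_left hcomm) hex.one_sub hey
  have e1 : ex * (1 - ey) = 0 := by
    refine (LinearMap.IsIdempotentElem.trace_eq_zero_iff i1).1 ?_
    rw [mul_sub, mul_one, map_sub, hxy, hx]
    linear_combination (2 / 9) * hp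
  have e2 : (1 - ex) * ey = 0 := by
    refine (LinearMap.IsIdempotentElem.trace_eq_zero_iff i2).1 ?_
    rw [sub_mul, one_mul, map_sub, hxy, hy]
    linear_combination (2 / 9) * hp
  have e3 : ex = ey := by
    rw [mul_sub, mul_one, sub_eq_zero] at e1
    rw [sub_mul, one_mul, sub_eq_zero] at e2
    rw [e1, ← e2]
  rw [← e3] at cc
  apply x7_eq_one_of_dt
  apply dt_eq_one_of_trace
  -- on the range of `ex` the three involutions agree, as `x7` permutes them
  have k1 : σ (dt 0 3 1 2) * ex = σ (dt 0 1 2 3) * ex := by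
    calc σ (dt 0 3 1 2) * ex = σ (dt 0 3 1 2) * (σ x7 * ex) := by rw [fx]
      _ = σ x7 * (σ (dt 0 1 2 3) * ex) := by
        rw [← mul_assoc, ← mul_assoc, ← map_mul, ← map_mul,
          show dt 0 3 1 2 * x7 = x7 * dt 0 1 2 3 by decide]
      _ = σ (dt 0 1 2 3) * ex := by rw [cc _ (by decide), ← mul_assoc, fx]
  have k2 : σ (dt 0 2 1 3) * ex = σ (dt 0 3 1 2) * ex := by
    calc σ (dt 0 2 1 3) * ex = σ (dt 0 2 1 3) * (σ x7 * ex) := by rw [fx]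
      _ = σ x7 * (σ (dt 0 3 1 2) * ex) := by
        rw [← mul_assoc, ← mul_assoc, ← map_mul, ← map_mul,
          show dt 0 2 1 3 * x7 = x7 * dt 0 3 1 2 by decide]
      _ = σ (dt 0 3 1 2) * ex := by rw [cc _ (by decide), ← mul_assoc, fx]
  have k3 : σ (dt 0 1 2 3) * ex = ex := by
    calc σ (dt 0 1 2 3) * ex = σ (dt 0 2 1 3) * (σ (dt 0 3 1 2) * ex) := by
          rw [← mul_assoc, ← map_mul, show dt 0 2 1 3 * dt 0 3 1 2 = dt 0 1 2 3 by decide]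
      _ = ex := by
          rw [← k2, ← mul_assoc, ← map_mul, show dt 0 2 1 3 * dt 0 2 1 3 = 1 by decide, map_one,
            one_mul]
  rw [k3, hx] at k4
  linear_combination -3 * k4

/-- The hypothesis says that the eigenspace `x = ω`, `y = ω` is zero; since all characters of
`⟨x, y⟩` nontrivial on both factors have the same multiplicity, none of them occurs. -/
theorem sub_one_mul_of_q (hq : Module.finrank ℂ V + tr (σ (x7 * y7)) = 2 * tr (σ x7)) :
    (σ x7 - 1) * (σ y7 - 1) = 0 := by
  have hex := proj3_idem σ (one_pow 3) x7_cube
  have hey := proj3_idem σ (one_pow 3) y7_cube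
  have hcomm := proj3_commute σ 1 1 x7_comm
  have hxy := tr_proj_mul σ 1 1
  have hx := tr_proj_x σ
  have hy := tr_proj_y σ
  have fx : σ x7 * proj3 σ 1 x7 = proj3 σ 1 x7 := mul_proj3_one σ x7_cube
  have fy : proj3 σ 1 y7 * σ y7 = proj3 σ 1 y7 := by
    rw [← proj3_comm_apply σ 1 rfl]; exact mul_proj3_one σ y7_cube
  generalize proj3 σ 1 x7 = ex at *
  generalize proj3 σ 1 y7 = ey at *
  have i1 : IsIdempotentElem ((1 - ex) * (1 - ey)) :=
    IsIdempotentElem.mul_of_commute ((Commute.one_right _).sub_right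
      ((Commute.one_left _).sub_left hcomm)) hex.one_sub hey.one_sub
  have e1 : (1 - ex) * (1 - ey) = 0 := by
    refine (LinearMap.IsIdempotentElem.trace_eq_zero_iff i1).1 ?_
    rw [mul_sub, mul_one, sub_mul, map_sub, map_sub, map_sub, one_mul, hxy, hy, hx,
      LinearMap.trace_one]
    linear_combination (4 / 9) * hq
  have hx1 : (σ x7 - 1) = (σ x7 - 1) * (1 - ex) := by
    rw [mul_sub, mul_one, sub_mul, fx, one_mul, sub_self, sub_zero]
  have hy1 : (σ y7 - 1) = (1 - ey) * (σ y7 - 1) := by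
    rw [sub_mul, one_mul, mul_sub, fy, mul_one, sub_self, sub_zero]
  rw [hx1, hy1, mul_assoc, ← mul_assoc (1 - ex), e1, zero_mul, mul_zero]

/-- Multiplicities of the characters of `⟨x, y⟩ ≅ C₃ × C₃`: `m` for the trivial one, `p` for each of
the four that are trivial on exactly one factor, `q` for each of the four nontrivial on both. They
depend only on the type because `A_7` fuses the corresponding elements. -/
theorem a7_numerics : ∃ m p q : ℕ, Module.finrank ℂ V = m + 4 * p + 4 * q ∧
    tr (σ x7) = m + p - 2 * q ∧ (p = 0 → σ x7 = 1) ∧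
    (q = 0 → (σ x7 - 1) * (σ y7 - 1) = 0) := by
  obtain ⟨ω, hω⟩ := exists_omega
  have hω3 : ω ^ 3 = 1 := by linear_combination (ω - 1) * hω
  have hidem : ∀ {ζ ξ : ℂ}, ζ ^ 3 = 1 → ξ ^ 3 = 1 →
      IsIdempotentElem (proj3 σ ζ x7 * proj3 σ ξ y7) := fun h1 h2 =>
    IsIdempotentElem.mul_of_commute (proj3_commute σ _ _ x7_comm) (proj3_idem σ h1 x7_cube)
      (proj3_idem σ h2 y7_cube)
  obtain ⟨m, hm⟩ := exists_nat_trace (hidem (one_pow 3) (one_pow 3))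
  obtain ⟨p, hp⟩ := exists_nat_trace (hidem (one_pow 3) hω3)
  obtain ⟨q, hq⟩ := exists_nat_trace (hidem hω3 hω3)
  have hω' : ω + ω ^ 2 = -1 := by linear_combination hω
  rw [tr_proj_mul] at hm hp hq
  simp only [hω', add_assoc] at hm hp hq
  refine ⟨m, p, q, ?_, ?_, ?_, ?_⟩
  · have : (Module.finrank ℂ V : ℂ) = m + 4 * p + 4 * q := by
      rw [← hm, ← hp, ← hq]; ring
    exact_mod_cast this
  · rw [← hm, ← hp, ← hq]; ring
  · rintro rfl
    apply x7_eq_one_of_p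
    push_cast at hp
    linear_combination 9 * hp
  · rintro rfl
    apply sub_one_mul_of_q
    push_cast at hq
    linear_combination 9 * hq

/-- If the double transpositions have trace `-d/3`, a Klein four-group of them has no fixed
vectors. -/
theorem klein_sum_zero {a b c : alternatingGroup (Fin 7)} (ha : a * a = 1) (hb : b * b = 1)
    (hab : a * b = c) (hba : b * a = c)
    (ta : tr (σ a) = tr (σ (dt 0 1 2 3))) (tb : tr (σ b) = tr (σ (dt 0 1 2 3)))
    (tc : tr (σ c) = tr (σ (dt 0 1 2 3)))
    (h : Module.finrank ℂ V + 3 * tr (σ (dt 0 1 2 3)) = 0) : 1 + σ a + σ b + σ c = 0 := by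
  have h0 := (LinearMap.IsIdempotentElem.trace_eq_zero_iff (klein_idem σ ha hb hab hba)).1 (by
    simp only [map_add, map_smul, smul_eq_mul, LinearMap.trace_one, ta, tb, tc]
    linear_combination (1 / 4) * h)
  exact (smul_eq_zero.1 h0).resolve_left (by norm_num)

/-- If no Klein four-group of double transpositions has fixed vectors, then `(0 1)(4 5)` and
`(0 1)(5 6)` act as `-1` on the fixed space of `(0 1)(2 3)`, so their product `(4 5 6)` fixes it
pointwise; the fixed spaces of the conjugates under `x` span everything. -/
theorem y7_eq_one_of_klein (h : Module.finrank ℂ V + 3 * tr (σ (dt 0 1 2 3)) = 0) :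
    σ y7 = 1 := by
  have s0 := klein_sum_zero σ (a := dt 0 1 2 3) (b := dt 0 2 1 3) (c := dt 0 3 1 2)
    (by decide) (by decide) (by decide) (by decide) rfl (tr_a2 σ) (tr_a3 σ) h
  have s1 := klein_sum_zero σ (a := dt 0 1 2 3) (b := dt 0 1 4 5) (c := dt 2 3 4 5)
    (by decide) (by decide) (by decide) (by decide) rfl
    (trace_eq_of_isConj σ (isConj_iff.2 ⟨dt 2 4 3 5, by decide⟩)).symm
    (trace_eq_of_isConj σ (isConj_iff.2 ⟨dt 0 4 1 5, by decide⟩)).symm h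
  have s2 := klein_sum_zero σ (a := dt 0 1 2 3) (b := dt 0 1 5 6) (c := dt 2 3 5 6)
    (by decide) (by decide) (by decide) (by decide) rfl
    (trace_eq_of_isConj σ (isConj_iff.2 ⟨dt 2 5 3 6, by decide⟩)).symm
    (trace_eq_of_isConj σ (isConj_iff.2 ⟨dt 0 5 1 6, by decide⟩)).symm h
  -- on the fixed space of `(0 1)(2 3)` both `(0 1)(4 5)` and `(0 1)(5 6)` act as `-1`
  have t1 : (1 + σ (dt 0 1 2 3)) * σ (dt 0 1 4 5) = -(1 + σ (dt 0 1 2 3)) := by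
    rw [add_mul, one_mul, ← map_mul, show dt 0 1 2 3 * dt 0 1 4 5 = dt 2 3 4 5 by decide]
    rw [eq_neg_iff_add_eq_zero, ← s1]; abel
  have t2 : (1 + σ (dt 0 1 2 3)) * σ (dt 0 1 5 6) = -(1 + σ (dt 0 1 2 3)) := by
    rw [add_mul, one_mul, ← map_mul, show dt 0 1 2 3 * dt 0 1 5 6 = dt 2 3 5 6 by decide]
    rw [eq_neg_iff_add_eq_zero, ← s2]; abel
  have u1 : (1 + σ (dt 0 1 2 3)) * σ y7 = 1 + σ (dt 0 1 2 3) := by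
    rw [show y7 = dt 0 1 4 5 * dt 0 1 5 6 by decide, map_mul σ, ← mul_assoc, t1, neg_mul, t2, neg_neg]
  have inv : σ x7 * σ (x7 * x7) = 1 := by rw [← map_mul, x7_cube, map_one]
  have conjug : ∀ a b : alternatingGroup (Fin 7), x7 * a = b * x7 →
      (1 + σ a) * σ y7 = 1 + σ a → (1 + σ b) * σ y7 = 1 + σ b := by
    intro a b hab ha
    have e1 : σ x7 * (1 + σ a) = (1 + σ b) * σ x7 := by
      rw [mul_add, add_mul, ← map_mul, ← map_mul, hab, one_mul, mul_one]
    have e2 : (1 + σ b) * σ y7 * σ x7 = (1 + σ b) * σ x7 := by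
      rw [mul_assoc, ← map_mul, ← x7_comm, map_mul, ← mul_assoc, ← e1, mul_assoc, ha]
    calc (1 + σ b) * σ y7 = (1 + σ b) * σ y7 * (σ x7 * σ (x7 * x7)) := by rw [inv, mul_one]
      _ = 1 + σ b := by rw [← mul_assoc, e2, mul_assoc, inv, mul_one]
  have u3 := conjug _ (dt 0 3 1 2) (by decide) u1
  have u2 := conjug _ (dt 0 2 1 3) (by decide) u3
  -- the three fixed spaces span, since `(1 + a₁) + (1 + a₂) + (1 + a₃) = 2`
  have hsum : (1 + σ (dt 0 1 2 3)) + (1 + σ (dt 0 2 1 3)) + (1 + σ (dt 0 3 1 2))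
      = (2 : ℂ) • (1 : Module.End ℂ V) := by
    have : σ (dt 0 3 1 2) = -(1 + σ (dt 0 1 2 3) + σ (dt 0 2 1 3)) := by
      rw [eq_neg_iff_add_eq_zero, ← s0]; abel
    rw [this]; module
  have h2 : ((2 : ℂ) • (1 : Module.End ℂ V)) * σ y7 = (2 : ℂ) • (1 : Module.End ℂ V) := by
    rw [← hsum, add_mul, add_mul, u1, u2, u3]
  rw [smul_mul_assoc, one_mul] at h2
  exact smul_right_injective _ (two_ne_zero) h2

/-- In dimension 9, with `k` the multiplicity of each nontrivial character of the Klein four-group on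
`{0, 1, 2, 3}`, the double transpositions have trace `9 - 4 k`, and the extreme values of `k` force
a 3-cycle to act trivially. -/
theorem a7_dim_nine (hd : Module.finrank ℂ V = 9) : ∃ k : ℕ, k ≤ 3 ∧
    tr (σ (dt 0 1 2 3)) = 9 - 4 * k ∧ (k = 0 → σ x7 = 1) ∧ (k = 3 → σ y7 = 1) := by
  obtain ⟨k, hk⟩ := exists_nat_trace (klein_idem' σ (a := dt 0 1 2 3) (b := dt 0 2 1 3)
    (c := dt 0 3 1 2) (by decide) (by decide) (by decide) (by decide))
  obtain ⟨r, hr⟩ := exists_nat_trace (klein_idem σ (a := dt 0 1 2 3) (b := dt 0 2 1 3)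
    (c := dt 0 3 1 2) (by decide) (by decide) (by decide) (by decide))
  simp only [map_add, map_sub, map_smul, smul_eq_mul, LinearMap.trace_one, tr_a2, tr_a3, hd] at hk hr
  push_cast at hk hr
  have hrk : r + 3 * k = 9 := by
    have : (r : ℂ) + 3 * k = 9 := by rw [← hk, ← hr]; ring
    exact_mod_cast this
  refine ⟨k, by omega, by linear_combination -4 * hk, ?_, ?_⟩
  · rintro rfl
    apply x7_eq_one_of_dt
    apply dt_eq_one_of_trace
    rw [hd]
    push_cast at hk ⊢
    linear_combination -4 * hk
  · rintro rfl
    apply y7_eq_one_of_klein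
    rw [hd]
    push_cast at hk ⊢
    linear_combination -12 * hk

end A7

/-! ### Integrality of central characters -/

section integrality
variable {G V : Type} [Group G] [Finite G] [AddCommGroup V] [Module ℂ V] [FiniteDimensional ℂ V]
  [Nontrivial V]

/-- Integrality of central characters: the sum over a conjugation-invariant set `C` on which the
character is the constant `t` acts on an irreducible representation by the scalar `|C| t / d`, which
is an algebraic integer. -/
theorem finrank_dvd_card_mul (ρ : Representation ℂ G V)
    (hirr : ∀ W : Submodule ℂ V, (∀ g : G, ∀ v ∈ W, ρ g v ∈ W) → W = ⊥ ∨ W = ⊤)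
    (C : Finset G) (hC : ∀ g, ∀ c ∈ C, g * c * g⁻¹ ∈ C) (t : ℤ)
    (ht : ∀ c ∈ C, LinearMap.trace ℂ V (ρ c) = t) :
    (Module.finrank ℂ V : ℤ) ∣ C.card * t := by
  classical
  set K : Module.End ℂ V := ∑ c ∈ C, ρ c with hK
  have hcomm : ∀ g, ρ g * K = K * ρ g := by
    intro g
    rw [hK, Finset.mul_sum, Finset.sum_mul]
    refine Finset.sum_bij' (fun c _ => g * c * g⁻¹) (fun c _ => g⁻¹ * c * g) ?_ ?_ ?_ ?_ ?_
    · intro c hc; exact hC g c hc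
    · intro c hc; simpa using hC g⁻¹ c hc
    · intro c hc; group
    · intro c hc; group
    · intro c hc
      rw [← map_mul, ← map_mul]; congr 1; group
  obtain ⟨μ, hμ⟩ := Module.End.exists_eigenvalue K
  have hKμ : K = algebraMap ℂ (Module.End ℂ V) μ := by
    have htop := (hirr (Module.End.eigenspace K μ) (by
      intro g v hv
      rw [Module.End.mem_eigenspace_iff] at hv ⊢
      have := congrArg (fun T : Module.End ℂ V => T v) (hcomm g)
      simp only [Module.End.mul_apply] at this
      rw [← this, hv, map_smul])).resolve_left hμ
    ext v
    have hv : v ∈ Module.End.eigenspace K μ := by rw [htop]; trivial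
    rw [Module.End.mem_eigenspace_iff] at hv
    rw [hv]; rfl
  have hμint : IsIntegral ℤ μ := by
    have h1 : IsIntegral ℤ (∑ c ∈ C, MonoidAlgebra.of ℤ G c) := Algebra.IsIntegral.isIntegral _
    have h2 := h1.map (MonoidAlgebra.lift ℤ (Module.End ℂ V) G ρ)
    have h3 : MonoidAlgebra.lift ℤ (Module.End ℂ V) G ρ (∑ c ∈ C, MonoidAlgebra.of ℤ G c) = K := by
      rw [map_sum, hK]
      refine Finset.sum_congr rfl fun c _ => ?_
      rw [MonoidAlgebra.lift_of]
    rw [h3, hKμ] at h2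
    exact (isIntegral_algebraMap_iff (FaithfulSMul.algebraMap_injective _ _)).1 h2
  have htr : (C.card : ℂ) * t = μ * Module.finrank ℂ V := by
    have h1 : LinearMap.trace ℂ V K = C.card * t := by
      rw [hK, map_sum, Finset.sum_congr rfl ht, Finset.sum_const, nsmul_eq_mul]
    rw [← h1, hKμ, Algebra.algebraMap_eq_smul_one, map_smul, LinearMap.trace_one, smul_eq_mul]
  have hd : (Module.finrank ℂ V : ℂ) ≠ 0 := by
    exact_mod_cast (Module.finrank_pos (R := ℂ) (M := V)).ne'
  have hrat : μ = algebraMap ℚ ℂ ((C.card * t : ℤ) / (Module.finrank ℂ V : ℤ) : ℚ) := by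
    simp only [map_div₀, eq_ratCast]
    push_cast
    rw [htr]; field_simp
  rw [hrat, isIntegral_algebraMap_iff (algebraMap ℚ ℂ).injective] at hμint
  obtain ⟨z, hz⟩ := IsIntegrallyClosed.isIntegral_iff.1 hμint
  refine ⟨z, ?_⟩
  have hd' : (Module.finrank ℂ V : ℚ) ≠ 0 := by
    exact_mod_cast (Module.finrank_pos (R := ℂ) (M := V)).ne'
  have : ((C.card * t : ℤ) : ℚ) = Module.finrank ℂ V * z := by
    simp only [eq_intCast] at hz
    rw [hz]; push_cast; field_simp
  exact_mod_cast this

end integrality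

/-! ### 3-cycles and double transpositions in `A_n`; good representations -/

section endgame
variable {n : ℕ}

/-- The 3-cycle `a ↦ b ↦ c ↦ a` for distinct `a`, `b`, `c` (junk value `1` if `a = b` or `b = c`,
where the product of transpositions may be odd). -/
def cyc (a b c : Fin n) : alternatingGroup (Fin n) :=
  if h : a ≠ b ∧ b ≠ c then
    ⟨Equiv.swap a b * Equiv.swap b c, mem_alternatingGroup.2 (by
      rw [Equiv.Perm.sign_mul, sign_swap h.1, sign_swap h.2]; rfl)⟩
  else 1

/-- The double transposition `(a b)(c d)`, with junk value `1` if `a = b` or `c = d`. -/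
def dtw (a b c d : Fin n) : alternatingGroup (Fin n) :=
  if h : a ≠ b ∧ c ≠ d then
    ⟨Equiv.swap a b * Equiv.swap c d, mem_alternatingGroup.2 (by
      rw [Equiv.Perm.sign_mul, sign_swap h.1, sign_swap h.2]; rfl)⟩
  else 1

theorem coe_cyc {a b c : Fin n} (h1 : a ≠ b) (h2 : b ≠ c) :
    (cyc a b c : Equiv.Perm (Fin n)) = Equiv.swap a b * Equiv.swap b c := by
  unfold cyc; rw [dif_pos ⟨h1, h2⟩]

theorem coe_dtw {a b c d : Fin n} (h1 : a ≠ b) (h2 : c ≠ d) :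
    (dtw a b c d : Equiv.Perm (Fin n)) = Equiv.swap a b * Equiv.swap c d := by
  unfold dtw; rw [dif_pos ⟨h1, h2⟩]

theorem cyc_apply {a b c : Fin n} (h1 : a ≠ b) (h2 : b ≠ c) (h3 : a ≠ c) (i : Fin n) :
    (cyc a b c : Equiv.Perm (Fin n)) i =
      if i = a then b else if i = b then c else if i = c then a else i := by
  rw [coe_cyc h1 h2, Equiv.Perm.mul_apply]
  simp only [Equiv.swap_apply_def]
  grind

theorem dtw_apply {a b c d : Fin n} (h1 : a ≠ b) (h2 : c ≠ d) (h3 : a ≠ c) (h4 : a ≠ d)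
    (h5 : b ≠ c) (h6 : b ≠ d) (i : Fin n) :
    (dtw a b c d : Equiv.Perm (Fin n)) i =
      if i = a then b else if i = b then a else if i = c then d else if i = d then c else i := by
  rw [coe_dtw h1 h2, Equiv.Perm.mul_apply]
  simp only [Equiv.swap_apply_def]
  grind

theorem alt_ext {g h : alternatingGroup (Fin n)}
    (H : ∀ i, (g : Equiv.Perm (Fin n)) i = (h : Equiv.Perm (Fin n)) i) : g = h :=
  Subtype.ext (Equiv.ext H)

theorem alt_mul_apply (g h : alternatingGroup (Fin n)) (i : Fin n) :
    ((g * h : alternatingGroup (Fin n)) : Equiv.Perm (Fin n)) i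
      = (g : Equiv.Perm (Fin n)) ((h : Equiv.Perm (Fin n)) i) := rfl

theorem alt_one_apply (i : Fin n) :
    ((1 : alternatingGroup (Fin n)) : Equiv.Perm (Fin n)) i = i := rfl

/-- An even permutation fixing `s` pointwise is a product of 3-cycles avoiding `s`. -/
theorem stab_induction (s : Finset (Fin n)) (H : Subgroup (alternatingGroup (Fin n)))
    (hcyc : ∀ a b c, a ∉ s → b ∉ s → c ∉ s → a ≠ b → b ≠ c → a ≠ c → cyc a b c ∈ H)
    (g : alternatingGroup (Fin n)) (hg : ∀ i ∈ s, (g : Equiv.Perm (Fin n)) i = i) : g ∈ H := by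
  have h1 : g ∈ (alternatingGroup.ofSubtype sᶜ).range := by
    rw [alternatingGroup.mem_range_ofSubtype_iff]
    intro i hi
    rw [Finset.mem_compl]
    intro his
    exact Equiv.Perm.mem_support.1 hi (hg i his)
  obtain ⟨k, rfl⟩ := h1
  suffices hk : (⊤ : Subgroup (alternatingGroup (sᶜ : Finset (Fin n)))) ≤
      H.comap (alternatingGroup.ofSubtype sᶜ) from hk (Subgroup.mem_top k)
  rw [← alternatingGroup.closure_isThreeCycles_eq_top, Subgroup.closure_le]
  intro z hz
  have hz : Equiv.Perm.IsThreeCycle z.1 := hz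
  show alternatingGroup.ofSubtype sᶜ z ∈ H
  have hne : (z.1.support).Nonempty := by
    rw [← Finset.card_pos, hz.card_support]; norm_num
  obtain ⟨a, ha⟩ := hne
  have heq := hz.eq_swap_mul_swap_iff_mem_support.2 ha
  have hab : a ≠ z.1 a := (Equiv.Perm.mem_support.1 ha).symm
  have hbc : z.1 a ≠ z.1 (z.1 a) := fun h => hab (z.1.injective h)
  have hca : a ≠ z.1 (z.1 a) := by
    intro h
    rw [← h] at heq
    rw [Equiv.swap_comm (z.1 a) a, Equiv.swap_mul_self] at heq
    rw [heq] at hab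
    exact hab rfl
  have hfin : alternatingGroup.ofSubtype sᶜ z = cyc (a : Fin n) (z.1 a : Fin n)
      (z.1 (z.1 a) : Fin n) := by
    apply Subtype.ext
    rw [coe_cyc (fun h => hab (Subtype.ext h)) (fun h => hbc (Subtype.ext h)),
      alternatingGroup.coe_ofSubtype]
    conv_lhs => rw [heq]
    rw [map_mul, Equiv.Perm.ofSubtype_swap_eq, Equiv.Perm.ofSubtype_swap_eq]
  rw [hfin]
  exact hcyc _ _ _ (Finset.mem_compl.1 a.2) (Finset.mem_compl.1 (z.1 a).2)
    (Finset.mem_compl.1 (z.1 (z.1 a)).2) (fun h => hab (Subtype.ext h))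
    (fun h => hbc (Subtype.ext h)) (fun h => hca (Subtype.ext h))

theorem exists_fresh (s : Finset (Fin n)) (hs : s.card < n) : ∃ i, i ∉ s := by
  by_contra h
  push Not at h
  have : s = Finset.univ := Finset.eq_univ_iff_forall.2 h
  rw [this] at hs
  simp at hs

theorem exists_alt_map (hn : 7 ≤ n) {a b c i j k : Fin n} (h1 : a ≠ b) (h2 : b ≠ c) (h3 : a ≠ c)
    (k1 : i ≠ j) (k2 : j ≠ k) (k3 : i ≠ k) :
    ∃ g : alternatingGroup (Fin n), (g : Equiv.Perm (Fin n)) a = i ∧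
      (g : Equiv.Perm (Fin n)) b = j ∧ (g : Equiv.Perm (Fin n)) c = k := by
  have := alternatingGroup.isMultiplyPretransitive (Fin n)
  have h3t : MulAction.IsMultiplyPretransitive (alternatingGroup (Fin n)) (Fin n) 3 := by
    apply MulAction.isMultiplyPretransitive_of_le (n := Nat.card (Fin n) - 2)
    · simp; omega
    · simp
  have e1 : Function.Injective ![a, b, c] := by
    intro u v; fin_cases u <;> fin_cases v <;> simp [h1, h2, h3, h1.symm, h2.symm, h3.symm]
  have e2 : Function.Injective ![i, j, k] := by
    intro u v; fin_cases u <;> fin_cases v <;> simp [k1, k2, k3, k1.symm, k2.symm, k3.symm]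
  obtain ⟨g, hg⟩ := MulAction.exists_smul_eq (alternatingGroup (Fin n))
    (⟨_, e1⟩ : Fin 3 ↪ Fin n) (⟨_, e2⟩ : Fin 3 ↪ Fin n)
  refine ⟨g, ?_, ?_, ?_⟩
  · exact congrArg (fun f : Fin 3 ↪ Fin n => f 0) hg
  · exact congrArg (fun f : Fin 3 ↪ Fin n => f 1) hg
  · exact congrArg (fun f : Fin 3 ↪ Fin n => f 2) hg

variable {V : Type} [AddCommGroup V] [Module ℂ V]

/-- A representation is good if `(x - 1)(y - 1) = 0` on it for any two disjoint 3-cycles `x`, `y`.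
Pairs of disjoint 3-cycles are indexed by embeddings of seven points, so that `A_7` is at hand. -/
def Good (ρ : Representation ℂ (alternatingGroup (Fin n)) V) : Prop :=
  ∀ f : Fin 7 ↪ Fin n, (ρ (altMap f x7) - 1) * (ρ (altMap f y7) - 1) = 0

theorem altMap_x7 (f : Fin 7 ↪ Fin n) : altMap f x7 = cyc (f 0) (f 1) (f 2) := by
  have hf : ∀ i j : Fin 7, i ≠ j → f i ≠ f j := fun i j h h' => h (f.injective h')
  apply altMap_eq_of
  · intro i
    rw [cyc_apply (hf _ _ (by decide)) (hf _ _ (by decide)) (hf _ _ (by decide))]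
    simp only [EmbeddingLike.apply_eq_iff_eq]
    revert i
    have : ∀ i : Fin 7, x7.1 i = if i = 0 then 1 else if i = 1 then 2 else if i = 2 then 0 else i := by
      decide
    intro i
    rw [this]
    split_ifs <;> rfl
  · intro i hi
    rw [cyc_apply (hf _ _ (by decide)) (hf _ _ (by decide)) (hf _ _ (by decide))]
    simp only [Set.mem_range, not_exists] at hi
    rw [if_neg (fun h => hi 0 h.symm), if_neg (fun h => hi 1 h.symm), if_neg (fun h => hi 2 h.symm)]

theorem altMap_y7 (f : Fin 7 ↪ Fin n) : altMap f y7 = cyc (f 4) (f 5) (f 6) := by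
  have hf : ∀ i j : Fin 7, i ≠ j → f i ≠ f j := fun i j h h' => h (f.injective h')
  apply altMap_eq_of
  · intro i
    rw [cyc_apply (hf _ _ (by decide)) (hf _ _ (by decide)) (hf _ _ (by decide))]
    simp only [EmbeddingLike.apply_eq_iff_eq]
    revert i
    have : ∀ i : Fin 7, y7.1 i = if i = 4 then 5 else if i = 5 then 6 else if i = 6 then 4 else i := by
      decide
    intro i
    rw [this]
    split_ifs <;> rfl
  · intro i hi
    rw [cyc_apply (hf _ _ (by decide)) (hf _ _ (by decide)) (hf _ _ (by decide))]
    simp only [Set.mem_range, not_exists] at hi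
    rw [if_neg (fun h => hi 4 h.symm), if_neg (fun h => hi 5 h.symm), if_neg (fun h => hi 6 h.symm)]

/-- Goodness in terms of vectors: a vector moved by a 3-cycle is fixed by all disjoint 3-cycles. -/
theorem Good.cyc_fix (hn : 7 ≤ n) {ρ : Representation ℂ (alternatingGroup (Fin n)) V}
    (hρ : Good ρ) {a b c d e f : Fin n} (h : [a, b, c, d, e, f].Nodup) (v : V) :
    ρ (cyc a b c) (ρ (cyc d e f) v - v) = ρ (cyc d e f) v - v := by
  obtain ⟨z, hz⟩ := exists_fresh {a, b, c, d, e, f} (lt_of_le_of_lt Finset.card_le_six (by omega))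
  have hinj : Function.Injective ![a, b, c, z, d, e, f] := by
    rw [← List.nodup_ofFn]
    simp [List.ofFn_succ] at h hz ⊢
    grind
  have := hρ ⟨_, hinj⟩
  rw [altMap_x7, altMap_y7] at this
  have h2 := congrArg (fun T : Module.End ℂ V => T v) this
  simp only [Module.End.mul_apply, LinearMap.sub_apply, Module.End.one_apply,
    LinearMap.zero_apply, sub_eq_zero] at h2
  exact h2

end endgame

/-! ### A vector behaving like `e_a - e_b` -/

section vectors
variable {n : ℕ} {V : Type} [AddCommGroup V] [Module ℂ V]

theorem rep_mul_apply {G : Type} [Group G] (ρ : Representation ℂ G V) (g h : G) (v : V) :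
    ρ (g * h) v = ρ g (ρ h v) := by
  rw [map_mul]; rfl

/-- The subgroup of elements fixing the vector `w`. -/
def fixer {G : Type} [Group G] (ρ : Representation ℂ G V) (w : V) : Subgroup G where
  carrier := {g | ρ g w = w}
  mul_mem' := by
    intro g h hg hh
    show ρ (g * h) _ = _
    rw [rep_mul_apply, hh, hg]
  one_mem' := by show ρ 1 _ = _; rw [map_one]; rfl
  inv_mem' := by
    intro g hg
    show ρ g⁻¹ _ = _
    have hg : ρ g w = w := hg
    conv_lhs => rw [← hg]
    rw [← rep_mul_apply, inv_mul_cancel, map_one]; rfl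

theorem cyc_cube {a b c : Fin n} (hab : a ≠ b) (hbc : b ≠ c) (hac : a ≠ c) :
    cyc a b c * (cyc a b c * cyc a b c) = 1 := by
  apply alt_ext
  intro i
  simp only [alt_mul_apply, alt_one_apply, cyc_apply hab hbc hac]
  by_cases h1 : i = a
  · subst h1; simp [hab.symm, hac.symm, hbc.symm]
  by_cases h2 : i = b
  · subst h2; simp [hab.symm, hac.symm, hbc.symm]
  by_cases h3 : i = c
  · subst h3; simp [hab.symm, hac.symm, hbc.symm]
  simp [h1, h2, h3]

theorem dtw_sq {a b k l : Fin n} (hab : a ≠ b) (hkl : k ≠ l) (hak : a ≠ k) (hal : a ≠ l)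
    (hbk : b ≠ k) (hbl : b ≠ l) : dtw a b k l * dtw a b k l = 1 := by
  apply alt_ext
  intro i
  simp only [alt_mul_apply, alt_one_apply, dtw_apply hab hkl hak hal hbk hbl]
  grind

theorem cyc_mul_dtw {a b c k l : Fin n} (hab : a ≠ b) (hbc : b ≠ c) (hac : a ≠ c)
    (hkl : k ≠ l) (hak : a ≠ k) (hal : a ≠ l) (hbk : b ≠ k) (hbl : b ≠ l)
    (hck : c ≠ k) (hcl : c ≠ l) :
    cyc a b c * dtw a b k l = dtw a b k l * (cyc a b c * cyc a b c) := by
  apply alt_ext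
  intro i
  simp only [alt_mul_apply, cyc_apply hab hbc hac, dtw_apply hab hkl hak hal hbk hbl]
  have hba := hab.symm
  have hcb := hbc.symm
  have hca := hac.symm
  have hlk := hkl.symm
  have hka := hak.symm
  have hla := hal.symm
  have hkb := hbk.symm
  have hlb := hbl.symm
  have hkc := hck.symm
  have hlc := hcl.symm
  by_cases h1 : i = a
  · subst h1; simp [*]
  by_cases h2 : i = b
  · subst h2; simp [*]
  by_cases h3 : i = c
  · subst h3; simp [*]
  by_cases h4 : i = k
  · subst h4; simp [*]
  by_cases h5 : i = l
  · subst h5; simp [*]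
  simp [*]

theorem dtw_eq_cyc_mul {a b k l : Fin n} (hab : a ≠ b) (hbk : b ≠ k) (hkl : k ≠ l) :
    dtw a b k l = cyc a b k * cyc b k l := by
  apply Subtype.ext
  rw [Subgroup.coe_mul, coe_dtw hab hkl, coe_cyc hab hbk, coe_cyc hbk hkl, mul_assoc,
    ← mul_assoc (Equiv.swap b k), Equiv.swap_mul_self, one_mul]

theorem cyc_comm {a b c d e f : Fin n} (h : [a, b, c, d, e, f].Nodup) :
    cyc a b c * cyc d e f = cyc d e f * cyc a b c := by
  simp only [List.nodup_cons, List.mem_cons, List.not_mem_nil, or_false, not_or] at h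
  obtain ⟨⟨h1, h2, h3, h4, h5⟩, ⟨h6, h7, h8, h9⟩, ⟨h10, h11, h12⟩, ⟨h13, h14⟩, h15, -⟩ := h
  apply Subtype.ext
  rw [Subgroup.coe_mul, Subgroup.coe_mul]
  apply Equiv.Perm.Disjoint.commute
  intro i
  rw [cyc_apply h1 h6 h2, cyc_apply h13 h15 h14]
  by_cases hi : i = a ∨ i = b ∨ i = c
  · right
    rw [if_neg, if_neg, if_neg] <;> rcases hi with rfl | rfl | rfl <;> assumption
  · left
    push Not at hi
    rw [if_neg hi.1, if_neg hi.2.1, if_neg hi.2.2]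

/-- The vectors `x v - v`, for `x = (a b c)`, are fixed by the pointwise stabiliser of `{a, b, c}`. -/
theorem Good.fix3 (hn : 7 ≤ n) {ρ : Representation ℂ (alternatingGroup (Fin n)) V}
    (hρ : Good ρ) {a b c : Fin n} (hab : a ≠ b) (hbc : b ≠ c) (hac : a ≠ c) (v : V)
    (g : alternatingGroup (Fin n)) (ga : g.1 a = a) (gb : g.1 b = b) (gc : g.1 c = c) :
    ρ g (ρ (cyc a b c) v - v) = ρ (cyc a b c) v - v := by
  refine stab_induction {a, b, c} (fixer ρ (ρ (cyc a b c) v - v)) ?_ g ?_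
  · intro d e f hd he hf hde hef hdf
    simp only [Finset.mem_insert, Finset.mem_singleton, not_or] at hd he hf
    exact hρ.cyc_fix hn (by simp; grind) v
  · simp [ga, gb, gc]

/-- If an involution inverting `x`, where `x³ = 1`, fixes all `x v - v`, then `x = 1`. -/
theorem eq_one_of_invert {x s : Module.End ℂ V} (hx : x * (x * x) = 1)
    (hxs : x * s = s * (x * x)) (h : ∀ v, s (x v - v) = x v - v) : x = 1 := by
  have h3 : ∀ v, x (x (x v)) = v := fun v => congrArg (fun f : Module.End ℂ V => f v) hx
  have hρxs : ∀ v, x (s v) = s (x (x v)) :=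
    fun v => congrArg (fun f : Module.End ℂ V => f v) hxs
  have h1 : ∀ v, x (x v - v) = v - x (x v) := by
    intro v
    have e1 := h v
    have e2 := h (x v)
    have e3 := hρxs (x v - v)
    rw [e1] at e3
    have e4 : x (x (x v - v)) = -((x (x v) - x v) + (x v - v)) := by
      simp only [map_sub, h3]; abel
    rw [e4, map_neg, map_add, e2, e1] at e3
    rw [e3]; abel
  ext u
  have e0 := h1 u
  have e1 := h1 (x u)
  simp only [map_sub, h3] at e0 e1
  have : (3 : ℂ) • (x u - u) = 0 := by
    have e2 : (3 : ℂ) • (x u - u) = -(x (x u) - x u - (u - x (x u))) -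
      (2 : ℂ) • (u - x (x u) - (x u - u)) := by module
    rw [e2, e0, e1]; simp
  have := (smul_eq_zero.1 this).resolve_left (by norm_num)
  simpa [sub_eq_zero] using this

end vectors

section vectors
variable {n : ℕ} {V : Type} [AddCommGroup V] [Module ℂ V]

/-- If `u` is fixed by the pointwise stabiliser of `{a, b, c}`, then `u - (a b)(k l) u` is negated
by every double transposition `(a b)(k' l')` fixing `c`. -/
theorem dtw_neg {ρ : Representation ℂ (alternatingGroup (Fin n)) V} {a b c k l k' l' : Fin n}
    {u : V} (hU : ∀ g : alternatingGroup (Fin n), g.1 a = a → g.1 b = b → g.1 c = c → ρ g u = u)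
    (hab : a ≠ b) (hac : a ≠ c) (hbc : b ≠ c)
    (hkl : k ≠ l) (hak : a ≠ k) (hal : a ≠ l) (hbk : b ≠ k) (hbl : b ≠ l)
    (hck : c ≠ k) (hcl : c ≠ l)
    (hkl' : k' ≠ l') (hak' : a ≠ k') (hal' : a ≠ l') (hbk' : b ≠ k') (hbl' : b ≠ l')
    (hck' : c ≠ k') (hcl' : c ≠ l') :
    ρ (dtw a b k' l') (u - ρ (dtw a b k l) u) = -(u - ρ (dtw a b k l) u) := by
  have hsa := dtw_apply hab hkl hak hal hbk hbl
  have hta := dtw_apply hab hkl' hak' hal' hbk' hbl'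
  have f1 : ρ (dtw a b k' l') (ρ (dtw a b k l) u) = u := by
    rw [← rep_mul_apply]
    apply hU <;> simp [*, hac.symm, hbc.symm, hab.symm]
  have f2 : ρ (dtw a b k' l') u = ρ (dtw a b k l) u := by
    have h1 : ρ (dtw a b k l * dtw a b k' l') u = u := by
      apply hU <;> simp [*, hac.symm, hbc.symm, hab.symm]
    calc ρ (dtw a b k' l') u
        = ρ ((dtw a b k l * dtw a b k l) * dtw a b k' l') u := by
          rw [dtw_sq hab hkl hak hal hbk hbl, one_mul]
      _ = ρ (dtw a b k l) u := by rw [mul_assoc, rep_mul_apply, h1]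
  rw [map_sub, f1, f2]; abel

/-- A vector negated by a double transposition `(a b)(k l)` is fixed by the 3-cycles disjoint from
it, because `-2 w = (a b)(k l) w - w` is a sum of vectors moved by 3-cycles inside
`{a, b, k, l}`. -/
theorem Good.cyc_fix_of_neg (hn : 7 ≤ n) {ρ : Representation ℂ (alternatingGroup (Fin n)) V}
    (hρ : Good ρ) {a b k l d e f : Fin n} {w : V} (hw : ρ (dtw a b k l) w = -w)
    (hab : a ≠ b) (hbk : b ≠ k) (hkl : k ≠ l)
    (h1 : [d, e, f, a, b, k].Nodup) (h2 : [d, e, f, b, k, l].Nodup) :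
    ρ (cyc d e f) w = w := by
  have g1 := hρ.cyc_fix hn h1 w
  have g2 := hρ.cyc_fix hn h2 w
  have hdec : (2 : ℂ) • w = -((ρ (cyc a b k) w - w) +
      ρ (cyc a b k) (ρ (cyc b k l) w - w)) := by
    rw [map_sub, ← rep_mul_apply, ← dtw_eq_cyc_mul hab hbk hkl, hw]; module
  have : (2 : ℂ) • ρ (cyc d e f) w = (2 : ℂ) • w := by
    rw [← map_smul, hdec, map_neg, map_add, g1, ← rep_mul_apply, cyc_comm h1, rep_mul_apply, g2]
  exact smul_right_injective _ two_ne_zero this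

/-- For a good representation with nontrivial 3-cycles there is a vector `w` behaving like
`e_a - e_b` in the permutation representation. -/
theorem exists_w (hn : 7 ≤ n) {ρ : Representation ℂ (alternatingGroup (Fin n)) V}
    (hρ : Good ρ) {a b c : Fin n} (hab : a ≠ b) (hbc : b ≠ c) (hac : a ≠ c)
    (hne : ρ (cyc a b c) ≠ 1) :
    ∃ w : V, w ≠ 0 ∧
      (∀ g : alternatingGroup (Fin n), g.1 a = a → g.1 b = b → ρ g w = w) ∧
      (∀ g : alternatingGroup (Fin n), g.1 a = b → g.1 b = a → ρ g w = -w) ∧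
      w + ρ (cyc a b c) w + ρ (cyc a b c * cyc a b c) w = 0 := by
  obtain ⟨k, hk⟩ := exists_fresh {a, b, c} (lt_of_le_of_lt Finset.card_le_three (by omega))
  obtain ⟨l, hl⟩ := exists_fresh {a, b, c, k} (lt_of_le_of_lt Finset.card_le_four (by omega))
  simp only [Finset.mem_insert, Finset.mem_singleton, not_or] at hk hl
  obtain ⟨hka, hkb, hkc⟩ := hk
  obtain ⟨hla, hlb, hlc, hlk⟩ := hl
  have hx3 := cyc_cube hab hbc hac
  have hss := dtw_sq hab (Ne.symm hlk) (Ne.symm hka) (Ne.symm hla) (Ne.symm hkb) (Ne.symm hlb)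
  have hxs := cyc_mul_dtw hab hbc hac (Ne.symm hlk) (Ne.symm hka) (Ne.symm hla) (Ne.symm hkb)
    (Ne.symm hlb) (Ne.symm hkc) (Ne.symm hlc)
  have hsa := dtw_apply hab (Ne.symm hlk) (Ne.symm hka) (Ne.symm hla) (Ne.symm hkb) (Ne.symm hlb)
  obtain ⟨v, hv⟩ : ∃ v, ρ (dtw a b k l) (ρ (cyc a b c) v - v) ≠ ρ (cyc a b c) v - v := by
    by_contra hcon
    push Not at hcon
    exact hne (eq_one_of_invert (by rw [← map_mul, ← map_mul, hx3, map_one])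
      (by rw [← map_mul, ← map_mul, ← map_mul, hxs]) hcon)
  have hU := hρ.fix3 hn hab hbc hac v
  have hρ3 : ∀ v, ρ (cyc a b c) (ρ (cyc a b c) (ρ (cyc a b c) v)) = v := by
    intro v
    rw [← rep_mul_apply, ← rep_mul_apply, mul_assoc, hx3, map_one]; rfl
  have hρs : ∀ v, ρ (dtw a b k l) (ρ (dtw a b k l) v) = v := by
    intro v
    rw [← rep_mul_apply, hss, map_one]; rfl
  have hρxs : ∀ v, ρ (cyc a b c) (ρ (dtw a b k l) v) =
      ρ (dtw a b k l) (ρ (cyc a b c) (ρ (cyc a b c) v)) := by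
    intro v
    rw [← rep_mul_apply, hxs, rep_mul_apply, rep_mul_apply]
  have hu0 : (ρ (cyc a b c) v - v) + ρ (cyc a b c) (ρ (cyc a b c) v - v) +
      ρ (cyc a b c) (ρ (cyc a b c) (ρ (cyc a b c) v - v)) = 0 := by
    simp only [map_sub, hρ3]; abel
  generalize ρ (cyc a b c) v - v = u at hv hU hu0
  have hneg : ∀ k' l', k' ≠ a → k' ≠ b → k' ≠ c → l' ≠ a → l' ≠ b → l' ≠ c → k' ≠ l' →
      ρ (dtw a b k' l') (u - ρ (dtw a b k l) u) = -(u - ρ (dtw a b k l) u) := by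
    intro k' l' h1 h2 h3 h4 h5 h6 h7
    exact dtw_neg hU hab hac hbc (Ne.symm hlk) (Ne.symm hka) (Ne.symm hla) (Ne.symm hkb)
      (Ne.symm hlb) (Ne.symm hkc) (Ne.symm hlc) h7 h1.symm h4.symm h2.symm h5.symm h3.symm h6.symm
  have hfix3 : ∀ d e f, d ≠ a → d ≠ b → e ≠ a → e ≠ b → f ≠ a → f ≠ b → d ≠ e → e ≠ f → d ≠ f →
      ρ (cyc d e f) (u - ρ (dtw a b k l) u) = u - ρ (dtw a b k l) u := by
    intro d e f h1 h2 h3 h4 h5 h6 h7 h8 h9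
    by_cases hc : c = d ∨ c = e ∨ c = f
    · obtain ⟨k', hk'⟩ := exists_fresh {a, b, d, e, f}
        (lt_of_le_of_lt Finset.card_le_five (by omega))
      obtain ⟨l', hl'⟩ := exists_fresh {a, b, d, e, f, k'}
        (lt_of_le_of_lt Finset.card_le_six (by omega))
      simp only [Finset.mem_insert, Finset.mem_singleton, not_or] at hk' hl'
      obtain ⟨p1, p2, p3, p4, p5⟩ := hk'
      obtain ⟨q1, q2, q3, q4, q5, q6⟩ := hl'
      have hkc' : k' ≠ c := by rcases hc with rfl | rfl | rfl <;> assumption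
      have hlc' : l' ≠ c := by rcases hc with rfl | rfl | rfl <;> assumption
      refine hρ.cyc_fix_of_neg hn (hneg k' l' p1 p2 hkc' q1 q2 hlc' (Ne.symm q6)) hab (Ne.symm p2)
        (Ne.symm q6) ?_ ?_
      · simp [*, Ne.symm p3, Ne.symm p4, Ne.symm p5, Ne.symm p1, Ne.symm p2]
      · simp [*, Ne.symm p3, Ne.symm p4, Ne.symm p5, Ne.symm p2, Ne.symm q2,
          Ne.symm q3, Ne.symm q4, Ne.symm q5, Ne.symm q6]
    · push Not at hc
      obtain ⟨c1, c2, c3⟩ := hc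
      have hya := cyc_apply h7 h8 h9
      have ya : (cyc d e f).1 a = a := by rw [hya, if_neg h1.symm, if_neg h3.symm, if_neg h5.symm]
      have yb : (cyc d e f).1 b = b := by rw [hya, if_neg h2.symm, if_neg h4.symm, if_neg h6.symm]
      have yc : (cyc d e f).1 c = c := by rw [hya, if_neg c1, if_neg c2, if_neg c3]
      have sa : (dtw a b k l).1 a = b := by rw [hsa, if_pos rfl]
      have sb : (dtw a b k l).1 b = a := by rw [hsa, if_neg hab.symm, if_pos rfl]
      have sc : (dtw a b k l).1 c = c := by
        rw [hsa, if_neg hac.symm, if_neg hbc.symm, if_neg (Ne.symm hkc), if_neg (Ne.symm hlc)]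
      have f2 : ρ (cyc d e f) (ρ (dtw a b k l) u) = ρ (dtw a b k l) u := by
        have : ρ (dtw a b k l * (cyc d e f * dtw a b k l)) u = u := by
          apply hU <;> simp only [alt_mul_apply, ya, yb, yc, sa, sb, sc]
        rw [rep_mul_apply, rep_mul_apply] at this
        rw [← hρs (ρ (cyc d e f) (ρ (dtw a b k l) u)), this]
      rw [map_sub, hU _ ya yb yc, f2]
  have hfix : ∀ g : alternatingGroup (Fin n), g.1 a = a → g.1 b = b →
      ρ g (u - ρ (dtw a b k l) u) = u - ρ (dtw a b k l) u := by
    intro g ga gb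
    refine stab_induction {a, b} (fixer ρ (u - ρ (dtw a b k l) u)) ?_ g ?_
    · intro d e f hd he hf hde hef hdf
      simp only [Finset.mem_insert, Finset.mem_singleton, not_or] at hd he hf
      exact hfix3 d e f hd.1 hd.2 he.1 he.2 hf.1 hf.2 hde hef hdf
    · simp [ga, gb]
  refine ⟨u - ρ (dtw a b k l) u, ?_, hfix, ?_, ?_⟩
  · rw [sub_ne_zero]; exact fun h => hv h.symm
  · intro g ga gb
    have h1 : ρ (dtw a b k l * g) (u - ρ (dtw a b k l) u) = u - ρ (dtw a b k l) u := by
      apply hfix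
      · rw [alt_mul_apply, ga, hsa, if_neg hab.symm, if_pos rfl]
      · rw [alt_mul_apply, gb, hsa, if_pos rfl]
    rw [rep_mul_apply] at h1
    have h2 := hneg k l hka hkb hkc hla hlb hlc (Ne.symm hlk)
    rw [← hρs (ρ g _), h1, h2]
  · rw [rep_mul_apply]
    simp only [map_sub, hρxs, hρ3]
    have : ρ (dtw a b k l) u + ρ (dtw a b k l) (ρ (cyc a b c) (ρ (cyc a b c) u)) +
        ρ (dtw a b k l) (ρ (cyc a b c) u) = 0 := by
      rw [← map_add, ← map_add, add_right_comm, hu0, map_zero]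
    calc _ = (u + ρ (cyc a b c) u + ρ (cyc a b c) (ρ (cyc a b c) u)) -
        (ρ (dtw a b k l) u + ρ (dtw a b k l) (ρ (cyc a b c) (ρ (cyc a b c) u)) +
          ρ (dtw a b k l) (ρ (cyc a b c) u)) := by abel
      _ = 0 := by rw [hu0, this, sub_zero]

end vectors

/-! ### The standard representation inside a good representation -/

section lowerBound
variable {n : ℕ} {V : Type} [AddCommGroup V] [Module ℂ V]

/-- A good representation with nontrivial 3-cycles contains vectors `v i` permuted by `A_n`,
pairwise distinct and summing to zero: the image of the standard representation. -/
theorem exists_vectors (hn : 7 ≤ n) {ρ : Representation ℂ (alternatingGroup (Fin n)) V}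
    (hρ : Good ρ) {a b c : Fin n} (hab : a ≠ b) (hbc : b ≠ c) (hac : a ≠ c)
    (hne : ρ (cyc a b c) ≠ 1) :
    ∃ v : Fin n → V, (∀ (g : alternatingGroup (Fin n)) i, ρ g (v i) = v (g.1 i)) ∧
      ∑ i, v i = 0 ∧ ∀ i j, i ≠ j → v i ≠ v j := by
  obtain ⟨w, hw0, hfix, hneg, hsum⟩ := exists_w hn hρ hab hbc hac hne
  classical
  -- `W i j` plays the role of `e_i - e_j`
  let W : Fin n → Fin n → V := fun i j =>
    if h : ∃ g : alternatingGroup (Fin n), g.1 a = i ∧ g.1 b = j then ρ h.choose w else 0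
  have hW : ∀ g : alternatingGroup (Fin n), W (g.1 a) (g.1 b) = ρ g w := by
    intro g
    have hex : ∃ h : alternatingGroup (Fin n), h.1 a = g.1 a ∧ h.1 b = g.1 b := ⟨g, rfl, rfl⟩
    have hWe : W (g.1 a) (g.1 b) = ρ hex.choose w := dif_pos hex
    obtain ⟨h1, h2⟩ := hex.choose_spec
    rw [hWe]
    generalize hex.choose = h at h1 h2
    have h3 : ρ (g⁻¹ * h) w = w := by
      apply hfix
      · rw [alt_mul_apply, h1]; exact g.1.symm_apply_apply a
      · rw [alt_mul_apply, h2]; exact g.1.symm_apply_apply b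
    calc ρ h w = ρ (g * (g⁻¹ * h)) w := by rw [mul_inv_cancel_left]
      _ = ρ g w := by rw [rep_mul_apply, h3]
  have hWd : ∀ i, W i i = 0 := by
    intro i
    apply dif_neg
    rintro ⟨g, h1, h2⟩
    exact hab (g.1.injective (h1.trans h2.symm))
  have htrans : ∀ i j, i ≠ j → ∃ g : alternatingGroup (Fin n), g.1 a = i ∧ g.1 b = j := by
    intro i j hij
    obtain ⟨k, hk⟩ := exists_fresh {i, j} (lt_of_le_of_lt Finset.card_le_two (by omega))
    simp only [Finset.mem_insert, Finset.mem_singleton, not_or] at hk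
    obtain ⟨g, h1, h2, -⟩ := exists_alt_map hn hab hbc hac hij (Ne.symm hk.2) (Ne.symm hk.1)
    exact ⟨g, h1, h2⟩
  have hWeq : ∀ (g : alternatingGroup (Fin n)) i j, ρ g (W i j) = W (g.1 i) (g.1 j) := by
    intro g i j
    by_cases hij : i = j
    · subst hij; rw [hWd, hWd, map_zero]
    · obtain ⟨h, rfl, rfl⟩ := htrans i j hij
      rw [hW, ← rep_mul_apply, ← hW]; rfl
  have hanti : ∀ i j, W j i = - W i j := by
    intro i j
    by_cases hij : i = j
    · subst hij; rw [hWd, neg_zero]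
    · obtain ⟨h, rfl, rfl⟩ := htrans i j hij
      obtain ⟨g, g1, g2⟩ := htrans b a hab.symm
      have := hW (h * g)
      rw [alt_mul_apply, alt_mul_apply, g1, g2, rep_mul_apply, hneg g g1 g2, map_neg, ← hW] at this
      exact this
  have htri : ∀ i j k, W i j + W j k = W i k := by
    intro i j k
    by_cases hij : i = j
    · subst hij; rw [hWd, zero_add]
    by_cases hjk : j = k
    · subst hjk; rw [hWd, add_zero]
    by_cases hik : i = k
    · subst hik; rw [hWd, hanti j i]; abel
    obtain ⟨g, rfl, rfl, rfl⟩ := exists_alt_map hn hab hbc hac hij hjk hik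
    have e1 : ρ (cyc a b c) w = W b c := by
      rw [← hW, cyc_apply hab hbc hac, cyc_apply hab hbc hac, if_pos rfl, if_neg hab.symm,
        if_pos rfl]
    have e2 : ρ (cyc a b c * cyc a b c) w = W c a := by
      rw [rep_mul_apply, e1, hWeq, cyc_apply hab hbc hac, cyc_apply hab hbc hac, if_neg hab.symm,
        if_pos rfl, if_neg hac.symm, if_neg hbc.symm, if_pos rfl]
    have e0 : w = W a b := by
      have := hW 1
      rw [map_one] at this
      exact this.symm
    rw [e1, e2] at hsum
    rw [← hWeq, ← hWeq, ← hWeq, ← map_add, hanti c a, ← e0]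
    congr 1
    rw [eq_neg_iff_add_eq_zero, hsum]
  have hdiff : ∀ i j, (∑ k, W i k) - (∑ k, W j k) = (n : ℂ) • W i j := by
    intro i j
    rw [← Finset.sum_sub_distrib]
    rw [Finset.sum_congr rfl (fun k _ => show W i k - W j k = W i j by
      rw [← htri i j k]; abel)]
    simp [Nat.cast_smul_eq_nsmul]
  refine ⟨fun i => ∑ j, W i j, ?_, ?_, ?_⟩
  · intro g i
    simp only [map_sum, hWeq]
    exact Equiv.sum_comp g.1 (fun j => W (g.1 i) j)
  · have h1 : ∑ i, ∑ j, W i j = - ∑ i, ∑ j, W i j := by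
      conv_lhs => rw [Finset.sum_comm]
      rw [← Finset.sum_neg_distrib]
      refine Finset.sum_congr rfl fun i _ => ?_
      rw [← Finset.sum_neg_distrib]
      exact Finset.sum_congr rfl fun j _ => hanti i j
    have h2 : (2 : ℂ) • ∑ i, ∑ j, W i j = 0 := by
      rw [two_smul]; nth_rewrite 1 [h1]; abel
    exact (smul_eq_zero.1 h2).resolve_left two_ne_zero
  · intro i j hij heq
    have h1 := hdiff i j
    rw [show ∑ k, W i k = ∑ k, W j k from heq, sub_self, eq_comm, smul_eq_zero] at h1
    rcases h1 with h1 | h1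
    · have : n = 0 := by exact_mod_cast h1
      omega
    · obtain ⟨g, rfl, rfl⟩ := htrans i j hij
      rw [hW] at h1
      apply hw0
      calc w = ρ (g⁻¹ * g) w := by rw [inv_mul_cancel, map_one]; rfl
        _ = 0 := by rw [rep_mul_apply, h1, map_zero]

theorem sum_cyc_sub {ρ : Representation ℂ (alternatingGroup (Fin n)) V} {v : Fin n → V}
    (hv : ∀ (g : alternatingGroup (Fin n)) i, ρ g (v i) = v (g.1 i)) {a b c : Fin n}
    (hab : a ≠ b) (hbc : b ≠ c) (hac : a ≠ c) (t : Fin n → ℂ) :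
    ρ (cyc a b c) (∑ i, t i • v i) - ∑ i, t i • v i =
      t a • (v b - v a) + t b • (v c - v b) + t c • (v a - v c) := by
  have h1 : ρ (cyc a b c) (∑ i, t i • v i) - ∑ i, t i • v i =
      ∑ i, t i • (v ((cyc a b c).1 i) - v i) := by
    rw [map_sum, ← Finset.sum_sub_distrib]
    exact Finset.sum_congr rfl fun i _ => by rw [map_smul, hv, smul_sub]
  rw [h1, ← Finset.sum_subset (Finset.subset_univ {a, b, c})]
  · rw [Finset.sum_insert (by simp [hab, hac]), Finset.sum_insert (by simp [hbc]),
      Finset.sum_singleton]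
    simp only [cyc_apply hab hbc hac]
    simp [hab.symm, hac.symm, hbc.symm]
    abel
  · intro i _ hi
    simp only [Finset.mem_insert, Finset.mem_singleton, not_or] at hi
    rw [cyc_apply hab hbc hac, if_neg hi.1, if_neg hi.2.1, if_neg hi.2.2, sub_self, smul_zero]

/-- The only linear relations among the `v i` are the multiples of `∑ v i = 0`. -/
theorem coeff_const (hn : 7 ≤ n) {ρ : Representation ℂ (alternatingGroup (Fin n)) V}
    {v : Fin n → V}
    (hv : ∀ (g : alternatingGroup (Fin n)) i, ρ g (v i) = v (g.1 i))
    (hd : ∀ i j, i ≠ j → v i ≠ v j) {t : Fin n → ℂ} (ht : ∑ i, t i • v i = 0) {a c : Fin n}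
    (hac : a ≠ c) : t a = t c := by
  obtain ⟨b, hb⟩ := exists_fresh {a, c} (lt_of_le_of_lt Finset.card_le_two (by omega))
  obtain ⟨d, hd'⟩ := exists_fresh {a, c, b} (lt_of_le_of_lt Finset.card_le_three (by omega))
  obtain ⟨e, he⟩ := exists_fresh {a, c, b, d} (lt_of_le_of_lt Finset.card_le_four (by omega))
  simp only [Finset.mem_insert, Finset.mem_singleton, not_or] at hb hd' he
  obtain ⟨b1, b2⟩ := hb
  obtain ⟨d1, d2, d3⟩ := hd'
  obtain ⟨e1, e2, e3, e4⟩ := he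
  have h1 := sum_cyc_sub hv (Ne.symm b1) b2 hac t
  rw [ht, map_zero, sub_zero] at h1
  have h2 := congrArg (ρ (cyc a d e)) h1
  have hy := cyc_apply (Ne.symm d1) (Ne.symm e4) (Ne.symm e1)
  have ya : (cyc a d e).1 a = d := by rw [hy, if_pos rfl]
  have yb : (cyc a d e).1 b = b := by rw [hy, if_neg b1, if_neg (Ne.symm d3), if_neg (Ne.symm e3)]
  have yc : (cyc a d e).1 c = c := by
    rw [hy, if_neg (Ne.symm hac), if_neg (Ne.symm d2), if_neg (Ne.symm e2)]
  simp only [map_add, map_smul, map_sub, hv, ya, yb, yc, map_zero] at h2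
  have h3 : (t a - t c) • (v a - v d) = 0 := by
    have : (t a - t c) • (v a - v d) = (t a • (v b - v d) + t b • (v c - v b) + t c • (v d - v c))
      - (t a • (v b - v a) + t b • (v c - v b) + t c • (v a - v c)) := by module
    rw [this, ← h1, ← h2, sub_zero]
  rcases smul_eq_zero.1 h3 with h | h
  · exact sub_eq_zero.1 h
  · exact absurd (sub_eq_zero.1 h) (hd a d (Ne.symm d1))

/-- A good representation with nontrivial 3-cycles contains an invariant subspace of dimension
`n - 1`. -/
theorem Good.exists_invariant (hn : 7 ≤ n) {ρ : Representation ℂ (alternatingGroup (Fin n)) V}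
    (hρ : Good ρ) {a b c : Fin n} (hab : a ≠ b) (hbc : b ≠ c) (hac : a ≠ c)
    (hne : ρ (cyc a b c) ≠ 1) :
    ∃ W : Submodule ℂ V, (∀ g, ∀ u ∈ W, ρ g u ∈ W) ∧ Module.finrank ℂ W = n - 1 := by
  obtain ⟨v, hv, hs, hd⟩ := exists_vectors hn hρ hab hbc hac hne
  refine ⟨Submodule.span ℂ (Set.range v), ?_, ?_⟩
  · intro g u hu
    induction hu using Submodule.span_induction with
    | mem x hx =>
      obtain ⟨i, rfl⟩ := hx
      rw [hv]; exact Submodule.subset_span ⟨_, rfl⟩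
    | zero => rw [map_zero]; exact Submodule.zero_mem _
    | add x y _ _ hx hy => rw [map_add]; exact Submodule.add_mem _ hx hy
    | smul t x _ hx => rw [map_smul]; exact Submodule.smul_mem _ _ hx
  · obtain ⟨m, rfl⟩ : ∃ m, n = m + 1 := ⟨n - 1, by omega⟩
    rw [Fin.sum_univ_succ] at hs
    have hspan : Submodule.span ℂ (Set.range v) =
        Submodule.span ℂ (Set.range fun i : Fin m => v i.succ) := by
      apply le_antisymm
      · rw [Submodule.span_le]
        rintro _ ⟨i, rfl⟩
        refine Fin.cases ?_ (fun j => ?_) i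
        · rw [eq_neg_of_add_eq_zero_left hs]
          exact Submodule.neg_mem _ (Submodule.sum_mem _ fun j _ => Submodule.subset_span ⟨j, rfl⟩)
        · exact Submodule.subset_span ⟨j, rfl⟩
      · apply Submodule.span_mono
        rintro _ ⟨j, rfl⟩
        exact ⟨_, rfl⟩
    have hli : LinearIndependent ℂ fun i : Fin m => v i.succ := by
      rw [Fintype.linearIndependent_iff]
      intro t ht i
      have := coeff_const hn hv hd (t := Fin.cons 0 t) (a := i.succ) (c := 0)
        (by rw [Fin.sum_univ_succ]; simpa using ht) (Fin.succ_ne_zero i)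
      simpa using this
    rw [hspan, finrank_span_eq_card hli]; simp

end lowerBound

/-! ### Reduction to irreducible representations, and class sums -/

section reduction
variable {n : ℕ} {V : Type} [AddCommGroup V] [Module ℂ V]

/-- For commuting operators with `x³ = y³ = 1`, the product `(x - 1)(y - 1)` is diagonalisable, so
it vanishes as soon as its square does. -/
theorem prod_eq_zero_of_sq {x y : Module.End ℂ V} (hx : x * (x * x) = 1) (hy : y * (y * y) = 1)
    (hxy : x * y = y * x) (h : (x - 1) * (y - 1) * ((x - 1) * (y - 1)) = 0) :
    (x - 1) * (y - 1) = 0 := by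
  have hc : Commute x y := hxy
  have hc1 : (y - 1) * (x - 1) = (x - 1) * (y - 1) := by
    simp only [mul_sub, sub_mul, mul_one, one_mul, hxy]; abel
  have cube : ∀ z : Module.End ℂ V, z * (z * z) = 1 →
      (z + 2) * ((z - 1) * (z - 1)) = (-3 : ℂ) • (z - 1) := by
    intro z hz
    have h1 : (z + 2) * ((z - 1) * (z - 1)) = z * (z * z) - 3 * z + 2 := by noncomm_ring
    rw [h1, hz]
    have : (3 : Module.End ℂ V) * z = (3 : ℂ) • z := by
      rw [show (3 : Module.End ℂ V) = (3 : ℂ) • (1 : Module.End ℂ V) by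
        rw [← Algebra.algebraMap_eq_smul_one, map_ofNat]]
      rw [smul_mul_assoc, one_mul]
    rw [this, show (2 : Module.End ℂ V) = (2 : ℂ) • (1 : Module.End ℂ V) by
        rw [← Algebra.algebraMap_eq_smul_one, map_ofNat]]
    module
  have hcx : (y + 2) * ((x - 1) * (x - 1)) = ((x - 1) * (x - 1)) * (y + 2) := by
    have : Commute (y + 2) (x - 1) := by
      refine Commute.sub_right ?_ (Commute.one_right _)
      exact Commute.add_left hc.symm (Commute.ofNat_left 2 x)
    exact (this.mul_right this)
  have h9 : (9 : ℂ) • ((x - 1) * (y - 1)) = 0 := by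
    calc (9 : ℂ) • ((x - 1) * (y - 1)) = ((-3 : ℂ) • (x - 1)) * ((-3 : ℂ) • (y - 1)) := by
          rw [smul_mul_smul_comm]; norm_num
      _ = ((x + 2) * ((x - 1) * (x - 1))) * ((y + 2) * ((y - 1) * (y - 1))) := by
          rw [cube x hx, cube y hy]
      _ = (x + 2) * (((y + 2) * ((x - 1) * (x - 1))) * ((y - 1) * (y - 1))) := by
          rw [hcx]; simp only [mul_assoc]
      _ = (x + 2) * ((y + 2) * ((x - 1) * (y - 1) * ((x - 1) * (y - 1)))) := by
          have : (x - 1) * (y - 1) * ((x - 1) * (y - 1)) =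
              (x - 1) * (x - 1) * ((y - 1) * (y - 1)) := by
            rw [mul_assoc (x - 1), ← mul_assoc (y - 1), hc1]
            simp only [mul_assoc]
          rw [this]; simp only [mul_assoc]
      _ = 0 := by rw [h, mul_zero, mul_zero]
  exact (smul_eq_zero.1 h9).resolve_left (by norm_num)

/-- Goodness is inherited by extensions. -/
theorem good_of_sub_quot (ρ : Representation ℂ (alternatingGroup (Fin n)) V) (W : Submodule ℂ V)
    (hW : ∀ g, W ≤ W.comap (ρ g)) (h1 : Good (ρ.subrepresentation W hW))
    (h2 : Good (ρ.quotient W hW)) : Good ρ := by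
  intro f
  apply prod_eq_zero_of_sq
  · rw [← map_mul, ← map_mul, ← map_mul, ← map_mul, x7_cube, map_one, map_one]
  · rw [← map_mul, ← map_mul, ← map_mul, ← map_mul, y7_cube, map_one, map_one]
  · rw [← map_mul, ← map_mul, ← map_mul, ← map_mul, x7_comm]
  · have k1 : ∀ w ∈ W, ((ρ (altMap f x7) - 1) * (ρ (altMap f y7) - 1)) w = 0 := by
      intro w hw
      have := congrArg (fun F : Module.End ℂ W => (F ⟨w, hw⟩ : V)) (h1 f)
      exact this
    have k2 : ∀ v, ((ρ (altMap f x7) - 1) * (ρ (altMap f y7) - 1)) v ∈ W := by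
      intro v
      have := congrArg (fun F : Module.End ℂ (V ⧸ W) => F (Submodule.Quotient.mk v)) (h2 f)
      exact (Submodule.Quotient.mk_eq_zero W).1 this
    apply LinearMap.ext
    intro v
    exact k1 _ (k2 v)

/-- It suffices to prove goodness for irreducible representations. -/
theorem good_of_irreducible (N : ℕ)
    (H : ∀ (V : Type) [AddCommGroup V] [Module ℂ V] [FiniteDimensional ℂ V]
      (ρ : Representation ℂ (alternatingGroup (Fin n)) V), Nontrivial V →
      (∀ W : Submodule ℂ V, (∀ g : alternatingGroup (Fin n), ∀ v ∈ W, ρ g v ∈ W) →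
        W = ⊥ ∨ W = ⊤) → Module.finrank ℂ V ≤ N → Good ρ) :
    ∀ (d : ℕ) (V : Type) [AddCommGroup V] [Module ℂ V] [FiniteDimensional ℂ V]
      (ρ : Representation ℂ (alternatingGroup (Fin n)) V), Module.finrank ℂ V = d → d ≤ N →
      Good ρ := by
  intro d
  induction d using Nat.strong_induction_on with
  | _ d ih =>
  intro V _ _ _ ρ hd hN
  by_cases hV : Nontrivial V
  · by_cases hirr : ∀ W : Submodule ℂ V, (∀ g : alternatingGroup (Fin n), ∀ v ∈ W, ρ g v ∈ W) →
        W = ⊥ ∨ W = ⊤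
    · exact H V ρ hV hirr (hd ▸ hN)
    · push Not at hirr
      obtain ⟨W, hW, hb, ht⟩ := hirr
      have h1 : Module.finrank ℂ W < d := hd ▸ Submodule.finrank_lt ht
      have h2 : Module.finrank ℂ (V ⧸ W) < d := by
        have e1 := Submodule.finrank_quotient_add_finrank W
        have e2 : 0 < Module.finrank ℂ W := by
          rw [Module.finrank_pos_iff, Submodule.nontrivial_iff_ne_bot]; exact hb
        omega
      exact good_of_sub_quot ρ W hW (ih _ h1 W _ rfl (by omega)) (ih _ h2 (V ⧸ W) _ rfl (by omega))
  · rw [not_nontrivial_iff_subsingleton] at hV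
    intro f
    exact Subsingleton.elim _ _

theorem cycleType_altMap {α β : Type} [Fintype α] [DecidableEq α] [Fintype β] [DecidableEq β]
    (f : β ↪ α) (g : alternatingGroup β) :
    (altMap f g : Equiv.Perm α).cycleType = (g : Equiv.Perm β).cycleType := by
  show (viaEmbedding (g : Equiv.Perm β) f).cycleType = _
  unfold viaEmbedding
  convert cycleType_extendDomain (Equiv.ofInjective f.1 f.2)

theorem trace_of_cycleType (ρ : Representation ℂ (alternatingGroup (Fin n)) V)
    {g h : alternatingGroup (Fin n)} (hgh : g.1.cycleType = h.1.cycleType)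
    (hs : g.1.cycleType.sum + 2 ≤ n) :
    LinearMap.trace ℂ V (ρ g) = LinearMap.trace ℂ V (ρ h) := by
  apply trace_eq_of_isConj
  apply alternatingGroup.isConj_of (Equiv.Perm.isConj_iff_cycleType_eq.2 hgh)
  rw [← Equiv.Perm.sum_cycleType, Fintype.card_fin]; exact hs

/-- Integrality of central characters, applied to the class of permutations with cycle type `m`. -/
theorem finrank_dvd_class [FiniteDimensional ℂ V] [Nontrivial V]
    (ρ : Representation ℂ (alternatingGroup (Fin n)) V)
    (hirr : ∀ W : Submodule ℂ V, (∀ g : alternatingGroup (Fin n), ∀ v ∈ W, ρ g v ∈ W) →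
      W = ⊥ ∨ W = ⊤) {m : Multiset ℕ} (hm : m.sum + 2 ≤ n) {g : alternatingGroup (Fin n)}
    (hg : g.1.cycleType = m) (t : ℤ) (ht : LinearMap.trace ℂ V (ρ g) = t) :
    (Module.finrank ℂ V : ℤ) ∣
      ({g | g.1.cycleType = m} : Finset (alternatingGroup (Fin n))).card * t := by
  apply finrank_dvd_card_mul ρ hirr
  · intro h c hc
    simp only [Finset.mem_filter, Finset.mem_univ, true_and] at hc ⊢
    rw [← hc]
    exact Equiv.Perm.cycleType_conj
  · intro c hc
    simp only [Finset.mem_filter, Finset.mem_univ, true_and] at hc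
    rw [← ht]
    exact trace_of_cycleType ρ (hc.trans hg.symm) (hc ▸ hm)

theorem x7_cycleType : x7.1.cycleType = {3} := by
  have h : x7.1 = Equiv.swap 1 0 * Equiv.swap 1 2 := by
    rw [Equiv.swap_comm 1 0]; rfl
  rw [h]
  exact Equiv.Perm.isThreeCycle_swap_mul_swap_same (by decide) (by decide) (by decide)

theorem dt_cycleType : (dt 0 1 2 3).1.cycleType = {2, 2} := by
  have hsw : ∀ i j : Fin 7, i ≠ j → (Equiv.swap i j).cycleType = {2} := by
    intro i j hij
    rw [(Equiv.Perm.isCycle_swap hij).cycleType, Equiv.Perm.card_support_swap hij]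
  show (Equiv.swap (0 : Fin 7) 1 * Equiv.swap 2 3).cycleType = _
  rw [Equiv.Perm.Disjoint.cycleType_mul, hsw _ _ (by decide), hsw _ _ (by decide)]
  · rfl
  · intro i; revert i; decide

theorem card_three : ∀ n, 7 ≤ n →
    ({g | g.1.cycleType = {3}} : Finset (alternatingGroup (Fin n))).card = 2 * n.choose 3 := by
  intro n hn
  rw [AlternatingGroup.card_of_cycleType_singleton (by norm_num) (by simp; omega),
    if_pos (by decide)]
  simp

theorem card_two_two :
    ({g | g.1.cycleType = {2, 2}} : Finset (alternatingGroup (Fin 7))).card = 105 := by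
  rw [AlternatingGroup.card_of_cycleType, if_pos (by decide)]
  decide

end reduction

/-! ### Representations of small dimension are good -/

section eigen
variable {n : ℕ} {V : Type} [AddCommGroup V] [Module ℂ V]

theorem altMap_cyc {m : ℕ} (k : Fin m ↪ Fin n) {a b c : Fin m} (hab : a ≠ b) (hbc : b ≠ c)
    (hac : a ≠ c) : altMap k (cyc a b c) = cyc (k a) (k b) (k c) := by
  have hk := cyc_apply (k.injective.ne hab) (k.injective.ne hbc) (k.injective.ne hac)
  apply altMap_eq_of
  · intro i
    rw [hk, cyc_apply hab hbc hac]
    simp only [EmbeddingLike.apply_eq_iff_eq]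
    split_ifs <;> rfl
  · intro i hi
    simp only [Set.mem_range, not_exists] at hi
    rw [hk, if_neg (fun h => hi a h.symm), if_neg (fun h => hi b h.symm),
      if_neg (fun h => hi c h.symm)]

theorem proj3_sum {G : Type} [Group G] (ρ : Representation ℂ G V) {ω : ℂ} (hω : ω ^ 2 + ω + 1 = 0)
    (g : G) : proj3 ρ 1 g + proj3 ρ ω g + proj3 ρ (ω ^ 2) g = 1 := by
  have h4 : (ω ^ 2) ^ 2 = ω := by linear_combination (ω ^ 2 - ω) * hω
  unfold proj3
  rw [h4]
  match_scalars
  · norm_num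
  · linear_combination (1 / 3) * hω
  · linear_combination (1 / 3) * hω

/-- If `(x - 1)(y - 1) ≠ 0`, then `y` acts nontrivially on one of the two eigenspaces of `x` for
the primitive cube roots of unity. -/
theorem exists_eigenspace {G : Type} [Group G] (ρ : Representation ℂ G V) {x y : G}
    (hx : x * (x * x) = 1) (hxy : x * y = y * x) (h : (ρ x - 1) * (ρ y - 1) ≠ 0) :
    ∃ ω : ℂ, ω ^ 2 + ω + 1 = 0 ∧ (ρ y - 1) * proj3 ρ ω x ≠ 0 := by
  obtain ⟨ω, hω⟩ := exists_omega
  by_contra hcon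
  push Not at hcon
  apply h
  have h1 := hcon ω hω
  have h2 := hcon (ω ^ 2) (by linear_combination (ω ^ 2 - ω + 1) * hω)
  have h3 : (ρ y - 1) = (ρ y - 1) * proj3 ρ 1 x := by
    have h5 := congrArg (fun F => (ρ y - 1) * F) (proj3_sum ρ hω x)
    simp only [mul_add, h1, h2, add_zero, mul_one] at h5
    exact h5.symm
  have h4 : (ρ y - 1) * proj3 ρ 1 x = proj3 ρ 1 x * (ρ y - 1) := by
    rw [sub_mul, mul_sub, proj3_comm_apply ρ 1 hxy, one_mul, mul_one]
  rw [h3, h4, ← mul_assoc, sub_mul, mul_proj3_one ρ hx, one_mul, sub_self, zero_mul]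

/-- The centraliser of a 3-cycle contains a copy of `A_{n-3}`, which acts on the eigenspaces of the
3-cycle. If a 3-cycle of `A_{n-3}` is nontrivial on such an eigenspace, goodness for `n - 3` bounds
its dimension below. -/
theorem eigenspace_bound [FiniteDimensional ℂ V] (hn : 10 ≤ n)
    (ih : ∀ (V : Type) [AddCommGroup V] [Module ℂ V] [FiniteDimensional ℂ V]
      (ρ : Representation ℂ (alternatingGroup (Fin (n - 3))) V),
      Module.finrank ℂ V ≤ n - 3 + 2 → Good ρ)
    (ρ : Representation ℂ (alternatingGroup (Fin n)) V) (f : Fin 7 ↪ Fin n) {ω : ℂ}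
    (h : (ρ (altMap f y7) - 1) * proj3 ρ ω (altMap f x7) ≠ 0) :
    n - 4 ≤ Module.finrank ℂ (LinearMap.range (proj3 ρ ω (altMap f x7))) := by
  by_contra hlt
  push Not at hlt
  have hf : ∀ i j : Fin 7, i ≠ j → f i ≠ f j := fun i j h h' => h (f.injective h')
  have hcard : ({f 0, f 1, f 2}ᶜ : Finset (Fin n)).card = n - 3 := by
    rw [Finset.card_compl, Fintype.card_fin, Finset.card_eq_three.2
      ⟨f 0, f 1, f 2, hf _ _ (by decide), hf _ _ (by decide), hf _ _ (by decide), rfl⟩]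
  let k : Fin (n - 3) ↪ Fin n := (Finset.orderEmbOfFin _ hcard).toEmbedding
  have hk : Set.range k = (({f 0, f 1, f 2}ᶜ : Finset (Fin n)) : Set (Fin n)) :=
    Finset.range_orderEmbOfFin _ hcard
  have hmem : ∀ i : Fin 7, i ≠ 0 → i ≠ 1 → i ≠ 2 → ∃ j, k j = f i := by
    intro i h0 h1 h2
    have : f i ∈ Set.range k := by
      rw [hk]
      simp [h0, h1, h2]
    exact this
  have hnot : ∀ i : Fin 7, i = 0 ∨ i = 1 ∨ i = 2 → f i ∉ Set.range k := by
    intro i hi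
    rw [hk]
    rcases hi with rfl | rfl | rfl <;> simp
  obtain ⟨a, ha⟩ := hmem 4 (by decide) (by decide) (by decide)
  obtain ⟨b, hb⟩ := hmem 5 (by decide) (by decide) (by decide)
  obtain ⟨c, hc⟩ := hmem 6 (by decide) (by decide) (by decide)
  have hab : a ≠ b := by rintro rfl; exact hf 4 5 (by decide) (ha.symm.trans hb)
  have hbc : b ≠ c := by rintro rfl; exact hf 5 6 (by decide) (hb.symm.trans hc)
  have hac : a ≠ c := by rintro rfl; exact hf 4 6 (by decide) (ha.symm.trans hc)
  have hy : altMap f y7 = altMap k (cyc a b c) := by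
    rw [altMap_y7, altMap_cyc k hab hbc hac, ha, hb, hc]
  have hcomm : ∀ g, altMap f x7 * altMap k g = altMap k g * altMap f x7 := by
    intro g
    apply Subtype.ext
    rw [Subgroup.coe_mul, Subgroup.coe_mul]
    apply Equiv.Perm.Disjoint.commute
    intro i
    by_cases hi : i ∈ Set.range k
    · left
      rw [altMap_x7, cyc_apply (hf _ _ (by decide)) (hf _ _ (by decide)) (hf _ _ (by decide)),
        if_neg, if_neg, if_neg]
      · rintro rfl; exact hnot 2 (by simp) hi
      · rintro rfl; exact hnot 1 (by simp) hi
      · rintro rfl; exact hnot 0 (by simp) hi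
    · exact Or.inr (altMap_apply_of_notMem _ _ _ hi)
  set E := LinearMap.range (proj3 ρ ω (altMap f x7)) with hE
  have hinv : ∀ g, E ≤ E.comap ((ρ.comp (altMap k) :
      Representation ℂ (alternatingGroup (Fin (n - 3))) V) g) := by
    rintro g _ ⟨v, rfl⟩
    refine ⟨ρ (altMap k g) v, ?_⟩
    exact congrArg (fun F : Module.End ℂ V => F v) (proj3_comm_apply ρ ω (hcomm g)).symm
  let τ : Representation ℂ (alternatingGroup (Fin (n - 3))) E :=
    Representation.subrepresentation (ρ.comp (altMap k)) E hinv
  have hgood : Good τ := ih E τ (by omega)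
  have hne : τ (cyc a b c) ≠ 1 := by
    intro hτ
    apply h
    apply LinearMap.ext
    intro v
    have := congrArg (fun F : Module.End ℂ E => (F ⟨_, v, rfl⟩ : V)) hτ
    have h' : ρ (altMap k (cyc a b c)) (proj3 ρ ω (altMap f x7) v) =
      proj3 ρ ω (altMap f x7) v := this
    rw [hy]
    show ρ (altMap k (cyc a b c)) (proj3 ρ ω (altMap f x7) v) - proj3 ρ ω (altMap f x7) v = 0
    rw [h', sub_self]
  obtain ⟨W, -, hW⟩ := hgood.exists_invariant (by omega) hab hbc hac hne
  have := Submodule.finrank_le W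
  omega

/-- The eigenspaces of a 3-cycle for the two primitive cube roots of unity have the same dimension,
as a 3-cycle is conjugate to its inverse. -/
theorem finrank_eigenspace [FiniteDimensional ℂ V]
    (ρ : Representation ℂ (alternatingGroup (Fin n)) V) (hn : 7 ≤ n) (f : Fin 7 ↪ Fin n) {ω : ℂ}
    (hω : ω ^ 2 + ω + 1 = 0) :
    (Module.finrank ℂ (LinearMap.range (proj3 ρ ω (altMap f x7))) : ℂ) =
      (1 / 3) * (Module.finrank ℂ V - LinearMap.trace ℂ V (ρ (altMap f x7))) := by
  have h3 : altMap f x7 * (altMap f x7 * altMap f x7) = 1 := by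
    rw [← map_mul, ← map_mul, x7_cube, map_one]
  rw [← (LinearMap.IsIdempotentElem.isProj_range _ (proj3_idem ρ
    (show ω ^ 3 = 1 by linear_combination (ω - 1) * hω) h3)).trace]
  have ht : LinearMap.trace ℂ V (ρ (altMap f x7 * altMap f x7)) =
      LinearMap.trace ℂ V (ρ (altMap f x7)) := by
    have h7 : (x7 * x7).1.cycleType = {3} := by
      have h : (x7 * x7).1 = x7.1⁻¹ := by
        rw [← Subgroup.coe_inv]
        exact congrArg Subtype.val (eq_inv_of_mul_eq_one_right x7_cube)
      rw [h, Equiv.Perm.cycleType_inv, x7_cycleType]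
    rw [← map_mul]
    apply trace_of_cycleType
    · rw [cycleType_altMap, cycleType_altMap, h7, x7_cycleType]
    · rw [cycleType_altMap, h7]; simpa using by omega
  unfold proj3
  simp only [map_add, map_smul, smul_eq_mul, LinearMap.trace_one, ht]
  linear_combination (1 / 3) * LinearMap.trace ℂ V (ρ (altMap f x7)) * hω

/-- Every representation of `A_n` of dimension at most `n + 2` is good. A bad irreducible one has
`p, q ≥ 1` in `a7_numerics`. For `n ≥ 10` the eigenspaces of a 3-cycle are too large; for `n ≤ 9` the
few remaining dimensions 8 to 11 contradict integrality of central characters. -/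
theorem good_of_finrank_le : ∀ n : ℕ, 7 ≤ n → ∀ (V : Type) [AddCommGroup V] [Module ℂ V]
    [FiniteDimensional ℂ V] (ρ : Representation ℂ (alternatingGroup (Fin n)) V),
    Module.finrank ℂ V ≤ n + 2 → Good ρ := by
  intro n
  induction n using Nat.strong_induction_on with
  | _ n ih =>
  intro hn V _ _ _ ρ hdim
  refine good_of_irreducible (n + 2) ?_ _ V ρ rfl hdim
  clear hdim ρ
  intro V _ _ _ ρ hV hirr hdim f
  by_contra hbad
  let σ : Representation ℂ (alternatingGroup (Fin 7)) V := ρ.comp (altMap f)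
  obtain ⟨m, p, q, hd, ht, hp, hq⟩ := a7_numerics σ
  have hp0 : p ≠ 0 := fun h => hbad (by
    have : ρ (altMap f x7) = 1 := hp h
    rw [this, sub_self, zero_mul])
  have hq0 : q ≠ 0 := fun h => hbad (hq h)
  have htr : LinearMap.trace ℂ V (ρ (altMap f x7)) = ((m + p - 2 * q : ℤ) : ℂ) := by
    push_cast; exact ht
  have hdvd := finrank_dvd_class ρ hirr (m := {3}) (by simp; omega)
    (by rw [cycleType_altMap, x7_cycleType]) _ htr
  rw [card_three n hn] at hdvd
  by_cases hn10 : 10 ≤ n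
  · have hx3 : altMap f x7 * (altMap f x7 * altMap f x7) = 1 := by
      rw [← map_mul, ← map_mul, x7_cube, map_one]
    have hxy : altMap f x7 * altMap f y7 = altMap f y7 * altMap f x7 := by
      rw [← map_mul, ← map_mul, x7_comm]
    obtain ⟨ω, hω, hne⟩ := exists_eigenspace ρ hx3 hxy hbad
    have h1 := eigenspace_bound hn10 (fun V _ _ _ ρ h => ih (n - 3) (by omega) (by omega) V ρ h)
      ρ f hne
    have h2 := finrank_eigenspace ρ hn f hω
    have h3 : Module.finrank ℂ (LinearMap.range (proj3 ρ ω (altMap f x7))) = p + 2 * q := by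
      rw [htr, hd] at h2
      have : (Module.finrank ℂ (LinearMap.range (proj3 ρ ω (altMap f x7))) : ℂ) =
          ((p + 2 * q : ℕ) : ℂ) := by
        rw [h2]; push_cast; ring
      exact_mod_cast this
    -- `d = (m + 2 p) + 2 (p + 2 q) ≥ 2 + 2 (n - 4)`, which exceeds `n + 2`
    omega
  by_cases hn7 : n = 7
  · subst hn7
    have hpq : p = 1 ∧ q = 1 ∧ m ≤ 1 := by omega
    obtain ⟨rfl, rfl, hm⟩ := hpq
    have hm' : m = 0 ∨ m = 1 := by omega
    rcases hm' with rfl | rfl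
    · -- dimension 8, trace -1 on the 70 3-cycles
      rw [hd] at hdvd
      revert hdvd; decide
    · obtain ⟨k, hk3, hkt, hk0, hk3'⟩ := a7_dim_nine σ hd
      have hk0' : k ≠ 0 := fun h => hbad (by
        have : ρ (altMap f x7) = 1 := hk0 h
        rw [this, sub_self, zero_mul])
      have hk3'' : k ≠ 3 := fun h => hbad (by
        have : ρ (altMap f y7) = 1 := hk3' h
        rw [this, sub_self, mul_zero])
      have htr2 : LinearMap.trace ℂ V (ρ (altMap f (dt 0 1 2 3))) = ((9 - 4 * k : ℤ) : ℂ) := by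
        push_cast; exact hkt
      have hdvd2 := finrank_dvd_class ρ hirr (m := {2, 2}) (by simp)
        (by rw [cycleType_altMap, dt_cycleType]) _ htr2
      rw [card_two_two, hd] at hdvd2
      have hk : k = 1 ∨ k = 2 := by omega
      rcases hk with rfl | rfl <;> revert hdvd2 <;> decide
  · have hd10 : 10 ≤ Module.finrank ℂ V := by
      by_contra hlt
      have hg := ih 7 (by omega) le_rfl V σ (by omega) (Function.Embedding.refl _)
      have hid : ∀ g, altMap (Function.Embedding.refl (Fin 7)) g = g := fun g =>
        altMap_eq_of _ _ _ (fun i => rfl) (fun i hi => absurd ⟨i, rfl⟩ hi)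
      rw [hid, hid] at hg
      exact hbad hg
    have hpq : p = 1 ∧ q = 1 := by omega
    obtain ⟨rfl, rfl⟩ := hpq
    rw [hd] at hdvd
    -- traces 1, 1, 2 on the 112, 168, 168 3-cycles, in dimensions 10, 10, 11
    have hcases : (n = 8 ∧ m = 2) ∨ (n = 9 ∧ m = 2) ∨ (n = 9 ∧ m = 3) := by omega
    rcases hcases with ⟨rfl, rfl⟩ | ⟨rfl, rfl⟩ | ⟨rfl, rfl⟩ <;> revert hdvd <;> decide

end eigen

/-! ### Irreducible representations of small dimension -/

/-- For `n ≥ 7`, every irreducible complex representation of the alternating group `A_n`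
on a finite-dimensional complex vector space of dimension at most `n + 2` has dimension
`1` or `n - 1`. Irreducibility is stated as: `V` is nonzero and the only subspaces of `V`
invariant under all `ρ g` are `⊥` and `⊤`. -/
theorem alternatingGroup_irreducible_rep_low_dim (n : ℕ) (hn : 7 ≤ n)
    (V : Type) [AddCommGroup V] [Module ℂ V] [FiniteDimensional ℂ V]
    (ρ : Representation ℂ (alternatingGroup (Fin n)) V)
    (hV : Nontrivial V)
    (hirr : ∀ W : Submodule ℂ V,
      (∀ g : alternatingGroup (Fin n), ∀ v ∈ W, ρ g v ∈ W) → W = ⊥ ∨ W = ⊤)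
    (hdim : Module.finrank ℂ V ≤ n + 2) :
    Module.finrank ℂ V = 1 ∨ Module.finrank ℂ V = n - 1 := by
  have hgood := good_of_finrank_le n hn V ρ hdim
  by_cases htriv : ∀ a b c : Fin n, a ≠ b → b ≠ c → a ≠ c → ρ (cyc a b c) = 1
  · left
    -- all 3-cycles act trivially, hence so does `A_n`, and every line is invariant
    have hone : ∀ g v, ρ g v = v := by
      intro g v
      refine stab_induction ∅ (fixer ρ v) ?_ g (by simp)
      intro a b c _ _ _ hab hbc hac
      show ρ (cyc a b c) v = v
      rw [htriv a b c hab hbc hac]; rfl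
    obtain ⟨v, hv⟩ := exists_ne (0 : V)
    rcases hirr (ℂ ∙ v) (fun g u hu => by rw [hone]; exact hu) with h | h
    · exact absurd (Submodule.span_singleton_eq_bot.1 h) hv
    · rw [← finrank_top ℂ V, ← h, finrank_span_singleton hv]
  · right
    push Not at htriv
    obtain ⟨a, b, c, hab, hbc, hac, hne⟩ := htriv
    obtain ⟨W, hW, hWd⟩ := hgood.exists_invariant hn hab hbc hac hne
    rcases hirr W hW with h | h
    · rw [h, finrank_bot] at hWd; omega
    · rw [h, finrank_top] at hWd; exact hWd
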